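/- arXiv:1604.08283 — 3 statements merged into one kernel-verified Lean document; each statement's English description precedes it below -/
import Mathlib

section
/- Let (A,b) be a unital A∞-algebra over a field k of characteristic 0. For every R ∈ Art, the assignment x ↦ (A⊗_kR, b⊗_kR + x) induces a bijection Def_{C̄^•(A)[1]}(R) = MC(C̄^•(A)[1]⊗_km_R)/exp((C̄^•(A)[1]⊗_km_R)⁰) ≅ 𝖣𝖠𝗅𝗀_A(R), natural in R, where 𝖣𝖠𝗅𝗀_A(R) is the set of isomorphism classes of deformations of (A,b) to R. -/
open Finsupp
open scoped Classical

namespace NCB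

variable (S : Type) [CommRing S] {κ : Type}

/-- The sign `(−1)^n` for `n : ℤ`. -/
noncomputable def sgn (n : ℤ) : S := if Even n then 1 else -1

/-- Degree of a basis element of `A` (the unit `none` = `1_A` has degree `0`). -/
def dgO (dg : κ → ℤ) : Option κ → ℤ := fun x => x.elim 0 dg

/-- `A ⊗ S`, for `A` a graded vector space with homogeneous basis `Option κ`. -/
abbrev Avs (κ : Type) (S : Type) [CommRing S] := Option κ →₀ S

/-- The bar coalgebra `BA ⊗ S = ⊕ₙ (A[1])^{⊗n} ⊗ S`, with basis the words in the basis
of `A`. -/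
abbrev BW (κ : Type) (S : Type) [CommRing S] := List (Option κ) →₀ S

/-- `(BA ⊗ BA) ⊗ S`. -/
abbrev BW2 (κ : Type) (S : Type) [CommRing S] :=
  (List (Option κ) × List (Option κ)) →₀ S

variable (dg : κ → ℤ)

/-- Degree in `BA` of a basis word: `Σ (|a|−1)` (suspended degrees). -/
def epsO : List (Option κ) → ℤ := fun ls => (ls.map fun x => dgO dg x - 1).sum

/-- The deconcatenation comultiplication `Δ : BA → BA ⊗ BA`. -/
noncomputable def comul : BW κ S →ₗ[S] BW2 κ S :=
  Finsupp.lift (BW2 κ S) S (List (Option κ)) fun ls =>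
    ∑ i ∈ Finset.range (ls.length + 1), Finsupp.single (ls.take i, ls.drop i) 1

/-- The counit `BA → S` (projection to the empty word). -/
noncomputable def counit : BW κ S →ₗ[S] S :=
  Finsupp.lift S S (List (Option κ)) fun ls => if ls = [] then 1 else 0

/-- `F ⊗ 1 : BA ⊗ BA → BA ⊗ BA`. -/
noncomputable def tensL (F : Module.End S (BW κ S)) : Module.End S (BW2 κ S) :=
  Finsupp.lift (BW2 κ S) S (List (Option κ) × List (Option κ)) fun pq =>
    (F (Finsupp.single pq.1 1)).sum fun p' c => Finsupp.single (p', pq.2) c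

/-- `1 ⊗ F : BA ⊗ BA → BA ⊗ BA` with the Koszul sign of a map `F` of degree `dF`. -/
noncomputable def tensR (dF : ℤ) (F : Module.End S (BW κ S)) : Module.End S (BW2 κ S) :=
  Finsupp.lift (BW2 κ S) S (List (Option κ) × List (Option κ)) fun pq =>
    sgn S (dF * epsO dg pq.1) •
      (F (Finsupp.single pq.2 1)).sum fun q' c => Finsupp.single (pq.1, q') c

/-- `F ⊗ G` for two maps of degree `0`. -/
noncomputable def tens2 (F G : Module.End S (BW κ S)) : Module.End S (BW2 κ S) :=
  Finsupp.lift (BW2 κ S) S (List (Option κ) × List (Option κ)) fun pq =>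
    (F (Finsupp.single pq.1 1)).sum fun p' c =>
      c • ((G (Finsupp.single pq.2 1)).sum fun q' c' => Finsupp.single (p', q') c')

/-- Projection `BA → A[1]` onto the words of length one. -/
noncomputable def proj1 : BW κ S →ₗ[S] Avs κ S :=
  Finsupp.lift (Avs κ S) S (List (Option κ)) fun ls =>
    match ls with
    | [x] => Finsupp.single x 1
    | _ => 0

/-- `F` is homogeneous of degree `dF` with respect to the grading of `BA`. -/
def HomogEnd (dF : ℤ) (F : Module.End S (BW κ S)) : Prop :=
  ∀ ls ms, ms ∈ (F (Finsupp.single ls 1)).support → epsO dg ms = epsO dg ls + dF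

/-- `F` is a coderivation of degree `dF` of the graded coalgebra `BA`:
`Δ∘F = (F⊗1 + 1⊗F)∘Δ`. -/
def IsCoder (dF : ℤ) (F : Module.End S (BW κ S)) : Prop :=
  comul S ∘ₗ F = tensL S F ∘ₗ comul S + tensR S dg dF F ∘ₗ comul S

/-- `F` is a morphism of the graded coalgebra `BA` (degree `0`):
`Δ∘F = (F⊗F)∘Δ` and `ε∘F = ε`. -/
def IsCoalgMor (F : Module.End S (BW κ S)) : Prop :=
  comul S ∘ₗ F = tens2 S F F ∘ₗ comul S ∧ counit S ∘ₗ F = counit S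

/-- `F` is normalized: its components vanish on words containing the unit `1_A`. -/
def NormalizedEnd (F : Module.End S (BW κ S)) : Prop :=
  ∀ ls, none ∈ ls → proj1 S (F (Finsupp.single ls 1)) = 0

/-- All matrix coefficients of `F` lie in the ideal `m` (i.e. `F ∈ End ⊗ m_R`). -/
def CoeffIn (m : Ideal S) (F : Module.End S (BW κ S)) : Prop :=
  ∀ ls ms, (F (Finsupp.single ls 1)) ms ∈ m

/-- The reduction of `F` modulo `m` is the identity. -/
def ReducesToId (m : Ideal S) (F : Module.End S (BW κ S)) : Prop :=
  ∀ ls ms, (F (Finsupp.single ls 1) - Finsupp.single ls 1 : BW κ S) ms ∈ m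

/-- Unit axioms for (the coderivation of) a curved A∞-structure, in terms of its components
`m_n`: `m₁(1_A) = 0`, `m₂[a|1_A] = m₂[1_A|a] = a`, and `m_n` vanishes on the unit for
`n ≥ 3`. -/
def UnitAxioms (D : Module.End S (BW κ S)) : Prop :=
  proj1 S (D (Finsupp.single [none] 1)) = 0 ∧
  (∀ x : Option κ, proj1 S (D (Finsupp.single [x, none] 1)) =
      sgn S (dgO dg x) • Finsupp.single x 1) ∧
  (∀ x : Option κ, proj1 S (D (Finsupp.single [none, x] 1)) = Finsupp.single x 1) ∧
  ∀ ls, 3 ≤ ls.length → none ∈ ls → proj1 S (D (Finsupp.single ls 1)) = 0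

end NCB

namespace NCB

variable (k : Type) [Field k] [CharZero k] {κ : Type}
variable (R : Type) [CommRing R] [Algebra k R]

/-- Base change `BA → BA ⊗ R` of the bar coalgebra. -/
noncomputable def mapBW : BW κ k →ₗ[k] BW κ R :=
  Finsupp.mapRange.linearMap (Algebra.linearMap k R)

/-- Base change of a `k`-linear endomorphism of `BA` to an `R`-linear endomorphism of
`BA ⊗ R`. -/
noncomputable def baseEnd (F : Module.End k (BW κ k)) : Module.End R (BW κ R) :=
  Finsupp.lift (BW κ R) R (List (Option κ)) fun ls => mapBW k R (F (Finsupp.single ls 1))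

/-- Truncated exponential `Σ_{i<N} F^i/i!` of an endomorphism (equal to `exp F` whenever
the coefficients of `F` lie in `m` with `m^N = 0`). -/
noncomputable def expEnd (N : ℕ) (F : Module.End R (BW κ R)) : Module.End R (BW κ R) :=
  ∑ i ∈ Finset.range N, algebraMap k R ((i.factorial : k)⁻¹) • F ^ i

/-- The gauge action `e^α • μ = μ + Σᵢ ad_α^i/(i+1)!·([α,μ] − ∂α)` of a degree-0 element
`α` on a degree-1 element `μ`, where `∂α = [Db, α]` (a finite sum: all terms beyond `N`
vanish). -/
noncomputable def gaugeEnd (N : ℕ) (Db : Module.End R (BW κ R))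
    (α μ : Module.End R (BW κ R)) : Module.End R (BW κ R) :=
  μ + ∑ i ∈ Finset.range N, algebraMap k R (((i + 1).factorial : k)⁻¹) •
    (fun y => α * y - y * α)^[i] ((α * μ - μ * α) - (Db * α - α * Db))

end NCB



namespace NCB
section basics

/-! ### signs -/
variable (S : Type) [CommRing S]

theorem sgn_zero : sgn S 0 = 1 := by simp [sgn]
theorem sgn_one : sgn S 1 = -1 := by simp [sgn]
theorem sgn_neg (a : ℤ) : sgn S (-a) = sgn S a := by simp [sgn]
theorem sgn_add (a b : ℤ) : sgn S (a + b) = sgn S a * sgn S b := by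
  unfold sgn
  by_cases ha : Even a <;> by_cases hb : Even b <;> simp [ha, hb, Int.even_add]
theorem sgn_sub (a b : ℤ) : sgn S (a - b) = sgn S a * sgn S b := by
  rw [sub_eq_add_neg, sgn_add, sgn_neg]
theorem sgn_mul_self (a : ℤ) : sgn S a * sgn S a = 1 := by
  unfold sgn
  by_cases ha : Even a <;> simp [ha]
theorem sgn_cast (k R : Type) [CommRing k] [CommRing R] [Algebra k R] (a : ℤ) :
    algebraMap k R (sgn k a) = sgn R a := by
  unfold sgn
  by_cases ha : Even a <;> simp [ha]

/-! ### sums over two-part splittings of words -/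
variable {α : Type} {M : Type*} [AddCommMonoid M]

/-- Sum over all splittings `w = p ++ q`. -/
noncomputable def T (f : List α → List α → M) (w : List α) : M :=
  ∑ i ∈ Finset.range (w.length + 1), f (w.take i) (w.drop i)

theorem T_nil (f : List α → List α → M) : T f [] = f [] [] := by simp [T]

theorem T_cons (f : List α → List α → M) (a : α) (w : List α) :
    T f (a :: w) = f [] (a :: w) + T (fun p q => f (a :: p) q) w := by
  unfold T
  rw [List.length_cons, Finset.sum_range_succ', add_comm]
  simp

theorem T_congr {f g : List α → List α → M} {w : List α}
    (h : ∀ p q, p ++ q = w → f p q = g p q) : T f w = T g w :=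
  Finset.sum_congr rfl fun _ _ => h _ _ (List.take_append_drop _ _)

theorem T_eq_zero {f : List α → List α → M} {w : List α}
    (h : ∀ p q, p ++ q = w → f p q = 0) : T f w = 0 :=
  Finset.sum_eq_zero fun _ _ => h _ _ (List.take_append_drop _ _)

theorem T_add (f g : List α → List α → M) (w : List α) :
    T (fun p q => f p q + g p q) w = T f w + T g w := Finset.sum_add_distrib

theorem T_append_cons (f : List α → List α → M) (u : List α) (a : α) (w : List α) :
    T f (u ++ a :: w) = T (fun p q => f p (q ++ a :: w)) u
      + T (fun p q => f (u ++ a :: p) q) w := by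
  induction u generalizing f with
  | nil => simp [T_cons, T_nil]
  | cons b u ih => rw [List.cons_append, T_cons, ih, T_cons]; simp [add_assoc]

theorem T_assoc (f : List α → List α → List α → M) (w : List α) :
    T (fun x r => T (fun y z => f x y z) r) w = T (fun r z => T (fun x y => f x y z) r) w := by
  induction w generalizing f with
  | nil => simp [T_nil]
  | cons a w ih =>
    rw [T_cons, T_cons, ih, T_cons, T_nil, add_assoc, ← T_add]
    congr 1
    refine T_congr fun p q _ => ?_
    rw [T_cons]

theorem map_T {M' F : Type*} [AddCommMonoid M'] [FunLike F M M'] [AddMonoidHomClass F M M']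
    (φ : F) (f : List α → List α → M) (w : List α) :
    φ (T f w) = T (fun p q => φ (f p q)) w := map_sum _ _ _

theorem T_smul {R : Type*} [Monoid R] [DistribMulAction R M] (r : R)
    (f : List α → List α → M) (w : List α) :
    r • T f w = T (fun p q => r • f p q) w := Finset.smul_sum

theorem T_mem {R : Type*} [Semiring R] [Module R M] (N : Submodule R M)
    {f : List α → List α → M} {w : List α}
    (h : ∀ p q, p ++ q = w → f p q ∈ N) : T f w ∈ N :=
  N.sum_mem fun _ _ => h _ _ (List.take_append_drop _ _)

/-- Only the splitting with empty left part contributes. -/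
theorem T_left {f : List α → List α → M} {w : List α}
    (h : ∀ p q, p ++ q = w → p ≠ [] → f p q = 0) : T f w = f [] w := by
  cases w with
  | nil => simp [T_nil]
  | cons a w =>
    rw [T_cons, T_eq_zero, add_zero]
    intro p q hpq
    exact h _ _ (by simp [hpq]) (by simp)

/-- Only the splitting with empty right part contributes. -/
theorem T_right {f : List α → List α → M} {w : List α}
    (h : ∀ p q, p ++ q = w → q ≠ [] → f p q = 0) : T f w = f w [] := by
  induction w generalizing f with
  | nil => simp [T_nil]
  | cons a w ih =>
    rw [T_cons, ih, h [] _ (by simp) (by simp), zero_add]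
    intro p q hpq
    exact h _ _ (by simp [hpq])

theorem T_neg {M : Type*} [AddCommGroup M] (f : List α → List α → M) (w : List α) :
    T (fun p q => - f p q) w = - T f w := Finset.sum_neg_distrib _

end basics

section coalg
variable {S : Type} [CommRing S] {κ : Type} (dg : κ → ℤ)

theorem epsO_nil : epsO dg [] = 0 := by simp [epsO]
theorem epsO_cons (a : Option κ) (w) : epsO dg (a :: w) = dgO dg a - 1 + epsO dg w := by
  simp [epsO]
theorem epsO_append (u w) : epsO dg (u ++ w) = epsO dg u + epsO dg w := by
  simp [epsO]
theorem dgO_none : dgO dg none = 0 := rfl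

theorem comul_single (w : List (Option κ)) :
    comul S (single w (1 : S)) = T (fun p q => single (p, q) 1) w := by
  simp [comul, T]

theorem tensL_single (F : Module.End S (BW κ S)) (p q : List (Option κ)) :
    tensL S F (single (p, q) 1) = lmapDomain S S (fun p' => (p', q)) (F (single p 1)) := by
  simp [tensL, Finsupp.mapDomain]

theorem tensR_single (d : ℤ) (F : Module.End S (BW κ S)) (p q : List (Option κ)) :
    tensR S dg d F (single (p, q) 1) =
      sgn S (d * epsO dg p) • lmapDomain S S (fun q' => (p, q')) (F (single q 1)) := by
  simp [tensR, Finsupp.mapDomain]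

theorem end_ext {M : Type*} [AddCommGroup M] [Module S M] {F G : BW κ S →ₗ[S] M}
    (h : ∀ w, F (single w 1) = G (single w 1)) : F = G :=
  Finsupp.lhom_ext' fun w => LinearMap.ext_ring (h w)

theorem end2_ext {M : Type*} [AddCommGroup M] [Module S M] {F G : BW2 κ S →ₗ[S] M}
    (h : ∀ p q, F (single (p, q) 1) = G (single (p, q) 1)) : F = G :=
  Finsupp.lhom_ext' fun w => LinearMap.ext_ring (h w.1 w.2)

theorem tensL_lmap (F : Module.End S (BW κ S)) (q : List (Option κ)) (v : BW κ S) :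
    tensL S F (lmapDomain S S (fun p' => (p', q)) v) =
      lmapDomain S S (fun p' => (p', q)) (F v) := by
  have : tensL S F ∘ₗ lmapDomain S S (fun p' => (p', q)) =
      lmapDomain S S (fun p' => (p', q)) ∘ₗ F := by
    apply end_ext
    intro w
    simp only [LinearMap.comp_apply, lmapDomain_apply, mapDomain_single]
    rw [tensL_single, lmapDomain_apply]
  exact LinearMap.congr_fun this v

theorem tensR_lmap (d : ℤ) (F : Module.End S (BW κ S)) (p : List (Option κ)) (v : BW κ S) :
    tensR S dg d F (lmapDomain S S (fun q' => (p, q')) v) =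
      sgn S (d * epsO dg p) • lmapDomain S S (fun q' => (p, q')) (F v) := by
  have : tensR S dg d F ∘ₗ lmapDomain S S (fun q' => (p, q')) =
      sgn S (d * epsO dg p) • (lmapDomain S S (fun q' => (p, q')) ∘ₗ F) := by
    apply end_ext
    intro w
    simp only [LinearMap.comp_apply, lmapDomain_apply, mapDomain_single, LinearMap.smul_apply]
    rw [tensR_single, lmapDomain_apply]
  exact LinearMap.congr_fun this v

theorem tensL_mul (F G : Module.End S (BW κ S)) : tensL S (F * G) = tensL S F * tensL S G := by
  apply end2_ext
  intro p q
  rw [Module.End.mul_apply, tensL_single, tensL_single, tensL_lmap, Module.End.mul_apply]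

theorem tensL_add (F G : Module.End S (BW κ S)) : tensL S (F + G) = tensL S F + tensL S G := by
  apply end2_ext
  intro p q
  simp only [LinearMap.add_apply, tensL_single, map_add]

theorem tensL_smul (r : S) (F : Module.End S (BW κ S)) : tensL S (r • F) = r • tensL S F := by
  apply end2_ext
  intro p q
  simp only [LinearMap.smul_apply, tensL_single, map_smul]

theorem tensL_one : tensL S (1 : Module.End S (BW κ S)) = 1 := by
  apply end2_ext
  intro p q
  simp [tensL_single]

theorem tensR_mul (a b : ℤ) (F G : Module.End S (BW κ S)) :
    tensR S dg (a + b) (F * G) = tensR S dg a F * tensR S dg b G := by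
  apply end2_ext
  intro p q
  rw [Module.End.mul_apply, tensR_single, tensR_single, map_smul, tensR_lmap,
    Module.End.mul_apply, smul_smul, add_mul, sgn_add, mul_comm]

theorem tensR_add (d : ℤ) (F G : Module.End S (BW κ S)) :
    tensR S dg d (F + G) = tensR S dg d F + tensR S dg d G := by
  apply end2_ext
  intro p q
  simp only [LinearMap.add_apply, tensR_single, map_add, smul_add]

theorem tensR_smul (d : ℤ) (r : S) (F : Module.End S (BW κ S)) :
    tensR S dg d (r • F) = r • tensR S dg d F := by
  apply end2_ext
  intro p q
  simp only [LinearMap.smul_apply, tensR_single, map_smul]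
  rw [smul_comm]

theorem tensR_one : tensR S dg 0 (1 : Module.End S (BW κ S)) = 1 := by
  apply end2_ext
  intro p q
  simp [tensR_single, sgn_zero]

theorem tens2_eq (F G : Module.End S (BW κ S)) :
    tens2 S F G = tensL S F * tensR S dg 0 G := by
  apply end2_ext
  intro p q
  rw [Module.End.mul_apply, tensR_single]
  simp only [zero_mul, sgn_zero, one_smul]
  have key : ∀ v : BW κ S, tensL S F (lmapDomain S S (fun q' => (p, q')) v) =
      (F (single p 1)).sum fun p' c => c • (v.sum fun q' c' => single (p', q') c') := by
    intro v
    induction v using Finsupp.induction_linear with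
    | zero => simp
    | add f g hf hg =>
      rw [map_add, map_add, hf, hg, ← Finsupp.sum_add]
      refine Finsupp.sum_congr fun x _ => ?_
      rw [Finsupp.sum_add_index' (by simp) (by simp), smul_add]
    | single a b =>
      have : (single a b : BW κ S) = b • single a 1 := by simp
      rw [this, map_smul, lmapDomain_apply, mapDomain_single, map_smul, tensL_single,
        lmapDomain_apply, mapDomain, Finsupp.smul_sum]
      refine Finsupp.sum_congr fun x _ => ?_
      simp [mul_comm]
  rw [key]
  simp [tens2]

theorem tensL_lmapR (F : Module.End S (BW κ S)) (p : List (Option κ)) (v : BW κ S) :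
    tensL S F (lmapDomain S S (fun q' => (p, q')) v) =
    ((F (single p 1)).sum fun p' c => c • lmapDomain S S (fun q' => (p', q')) v) := by
  induction v using Finsupp.induction_linear with
  | zero => simp
  | add f g hf hg =>
    rw [map_add, map_add, hf, hg, ← Finsupp.sum_add]
    refine Finsupp.sum_congr fun x _ => ?_
    rw [map_add, smul_add]
  | single a b =>
    have : (single a b : BW κ S) = b • single a 1 := by simp
    rw [this, map_smul, lmapDomain_apply, mapDomain_single, map_smul, tensL_single,
      lmapDomain_apply, mapDomain, Finsupp.smul_sum]
    refine Finsupp.sum_congr fun x _ => ?_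
    simp [mul_comm]

theorem tens_comm (a b : ℤ) (F G : Module.End S (BW κ S)) (hF : HomogEnd S dg a F) :
    tensR S dg b G * tensL S F = sgn S (a * b) • (tensL S F * tensR S dg b G) := by
  apply end2_ext
  intro p q
  rw [LinearMap.smul_apply, Module.End.mul_apply, Module.End.mul_apply, tensR_single, tensL_single,
    map_smul]
  have h1 : ∀ v : BW κ S, (∀ ms ∈ v.support, epsO dg ms = epsO dg p + a) →
      tensR S dg b G (lmapDomain S S (fun p' => (p', q)) v) =
      (sgn S (a * b) * sgn S (b * epsO dg p)) •
        v.sum fun p' c => c • lmapDomain S S (fun q' => (p', q')) (G (single q 1)) := by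
    intro v hv
    rw [lmapDomain_apply, mapDomain, map_finsuppSum, Finsupp.smul_sum]
    refine Finsupp.sum_congr fun x hx => ?_
    have : (single (x, q) (v x) : BW2 κ S) = v x • single (x, q) 1 := by simp
    rw [this, map_smul, tensR_single, hv x hx, smul_comm, mul_add, sgn_add, mul_comm, mul_comm b a]
  rw [h1 _ (hF p), mul_smul]
  rw [tensL_lmapR]

end coalg
end NCB


namespace NCB
section coder
variable {S : Type} [CommRing S] {κ : Type} (dg : κ → ℤ)

theorem lmapL_apply (q q' p : List (Option κ)) (v : BW κ S) :
    (lmapDomain S S (fun p' => (p', q)) v : BW2 κ S) (p, q') = if q = q' then v p else 0 := by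
  rw [lmapDomain_apply]
  split_ifs with h
  · subst h
    exact mapDomain_apply (f := fun p' : List (Option κ) => (p', q))
      (fun a b hab => by simpa using hab) v p
  · apply mapDomain_of_notMem_range
    rintro ⟨x, hx⟩
    simp at hx
    exact h hx.2

theorem lmapR_apply (p p' q : List (Option κ)) (v : BW κ S) :
    (lmapDomain S S (fun q' => (p, q')) v : BW2 κ S) (p', q) = if p = p' then v q else 0 := by
  rw [lmapDomain_apply]
  split_ifs with h
  · subst h
    exact mapDomain_apply (f := fun q' : List (Option κ) => (p, q'))
      (fun a b hab => by simpa using hab) v q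
  · apply mapDomain_of_notMem_range
    rintro ⟨x, hx⟩
    simp at hx
    exact h hx.1

theorem T_single_apply (w p q : List (Option κ)) :
    (T (fun p q => single (p, q) (1 : S)) w : BW2 κ S) (p, q) = if w = p ++ q then 1 else 0 := by
  induction w generalizing p with
  | nil =>
    rw [T_nil, single_apply]
    simp [eq_comm]
  | cons a w ih =>
    rw [T_cons, Finsupp.add_apply, single_apply]
    cases p with
    | nil =>
      have : (T (fun p q => single (a :: p, q) (1 : S)) w : BW2 κ S) ([], q) = 0 := by
        unfold T
        rw [Finsupp.finsetSum_apply]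
        exact Finset.sum_eq_zero fun i _ => by simp [single_apply]
      rw [this]
      simp
    | cons b p =>
      have h2 : (T (fun p q => single (a :: p, q) (1 : S)) w : BW2 κ S) (b :: p, q) =
          if a = b then (T (fun p q => single (p, q) (1 : S)) w : BW2 κ S) (p, q) else 0 := by
        unfold T
        rw [Finsupp.finsetSum_apply, Finsupp.finsetSum_apply]
        split_ifs with h
        · subst h
          exact Finset.sum_congr rfl fun i _ => by simp [single_apply]
        · exact Finset.sum_eq_zero fun i _ => by simp [single_apply, h]
      rw [h2, ih]
      by_cases hab : a = b <;> simp [hab]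

theorem comul_apply (v : BW κ S) (p q : List (Option κ)) : comul S v (p, q) = v (p ++ q) := by
  have : (Finsupp.lapply (p, q) : BW2 κ S →ₗ[S] S) ∘ₗ comul S = Finsupp.lapply (p ++ q) := by
    apply end_ext
    intro w
    rw [LinearMap.comp_apply, comul_single, lapply_apply, lapply_apply, T_single_apply, single_apply]
  exact LinearMap.congr_fun this v

theorem proj1_apply (v : BW κ S) (c : Option κ) : proj1 S v c = v [c] := by
  have : (Finsupp.lapply c : Avs κ S →ₗ[S] S) ∘ₗ proj1 S = Finsupp.lapply [c] := by
    apply end_ext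
    intro w
    rw [LinearMap.comp_apply, lapply_apply, lapply_apply]
    match w with
    | [] => simp [proj1, single_apply]
    | [x] => simp [proj1, single_apply]
    | x :: y :: t => simp [proj1, single_apply]
  exact LinearMap.congr_fun this v

theorem tensL_comul_apply (F : Module.End S (BW κ S)) (w p q : List (Option κ)) :
    tensL S F (comul S (single w 1)) (p, q) =
      T (fun a b => if b = q then F (single a 1) p else 0) w := by
  rw [comul_single, map_T]
  change Finsupp.lapply (R := S) (p, q) _ = _
  rw [map_T]
  refine T_congr fun a b _ => ?_
  rw [tensL_single, lapply_apply, lmapL_apply]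

theorem tensR_comul_apply (d : ℤ) (F : Module.End S (BW κ S)) (w p q : List (Option κ)) :
    tensR S dg d F (comul S (single w 1)) (p, q) =
      T (fun a b => if a = p then sgn S (d * epsO dg p) * F (single b 1) q else 0) w := by
  rw [comul_single, map_T]
  change Finsupp.lapply (R := S) (p, q) _ = _
  rw [map_T]
  refine T_congr fun a b _ => ?_
  rw [tensR_single, lapply_apply, Finsupp.smul_apply, lmapR_apply]
  split_ifs with h
  · subst h; rfl
  · simp

theorem isCoder_iff (d : ℤ) (F : Module.End S (BW κ S)) :
    IsCoder S dg d F ↔ ∀ w p q, F (single w 1) (p ++ q) =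
      T (fun a b => if b = q then F (single a 1) p else 0) w +
      T (fun a b => if a = p then sgn S (d * epsO dg p) * F (single b 1) q else 0) w := by
  constructor
  · intro h w p q
    have := congrArg (fun G => G (single w 1) (p, q)) h
    simpa only [LinearMap.comp_apply, LinearMap.add_apply, Finsupp.add_apply, comul_apply,
      tensL_comul_apply, tensR_comul_apply] using this
  · intro h
    apply end_ext
    intro w
    ext ⟨p, q⟩
    simpa only [LinearMap.comp_apply, LinearMap.add_apply, Finsupp.add_apply, comul_apply,
      tensL_comul_apply, tensR_comul_apply] using h w p q

theorem T_memI {α : Type} (J : Ideal S) {f : List α → List α → S} {w : List α}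
    (h : ∀ p q, p ++ q = w → f p q ∈ J) : T f w ∈ J := T_mem J h

/-- An almost-coderivation with almost vanishing linear part almost vanishes. -/
theorem coder_unique (J : Ideal S) (d : ℤ) (G : Module.End S (BW κ S))
    (hG : ∀ w p q, (comul S (G (single w 1)) - tensL S G (comul S (single w 1))
      - tensR S dg d G (comul S (single w 1)) : BW2 κ S) (p, q) ∈ J)
    (h1 : ∀ w c, proj1 S (G (single w 1)) c ∈ J) : CoeffIn S J G := by
  have main : ∀ n, ∀ w : List (Option κ), w.length < n → ∀ ms, G (single w 1) ms ∈ J := by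
    intro n
    induction n with
    | zero => intro w hw; omega
    | succ n ih =>
      intro w hw ms
      match ms with
      | [] =>
        have h := hG w [] []
        simp only [Finsupp.sub_apply, comul_apply, tensL_comul_apply, tensR_comul_apply] at h
        rw [T_right (fun p q _ hq => by simp [hq]), T_left (fun p q _ hq => by simp [hq])] at h
        simp [epsO_nil, sgn_zero] at h
        exact h
      | [c] => rw [← proj1_apply]; exact h1 w c
      | c :: e :: t =>
        have h := hG w [c] (e :: t)
        simp only [Finsupp.sub_apply, comul_apply, tensL_comul_apply, tensR_comul_apply] at h
        have hA : T (fun a b => if b = e :: t then G (single a 1) [c] else 0) w ∈ J := by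
          apply T_memI
          rintro a b hab
          split_ifs with hb
          · apply ih
            have := congrArg List.length hab
            simp [hb] at this
            omega
          · exact J.zero_mem
        have hB : T (fun a b => if a = [c] then
            sgn S (d * epsO dg [c]) * G (single b 1) (e :: t) else 0) w ∈ J := by
          apply T_memI
          rintro a b hab
          split_ifs with hb
          · apply J.mul_mem_left
            apply ih
            have := congrArg List.length hab
            simp [hb] at this
            omega
          · exact J.zero_mem
        have := J.add_mem (J.add_mem h hB) hA
        simpa using this
  intro w ms
  exact main _ w (Nat.lt_succ_self _) ms

theorem end_eq_zero_of_coeffIn {G : Module.End S (BW κ S)} (h : CoeffIn S ⊥ G) : G = 0 := by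
  apply end_ext
  intro w
  ext ms
  simpa using h w ms

/-- `a ↦ x a z` -/
noncomputable def ins (x z : List (Option κ)) : Avs κ S →ₗ[S] BW κ S :=
  lmapDomain S S (fun c => x ++ c :: z)

theorem ins_single (x z : List (Option κ)) (c : Option κ) (r : S) :
    ins x z (single c r) = single (x ++ c :: z) r := by simp [ins]

theorem avs_ext {M : Type*} [AddCommGroup M] [Module S M] {F G : Avs κ S →ₗ[S] M}
    (h : ∀ w, F (single w 1) = G (single w 1)) : F = G :=
  Finsupp.lhom_ext' fun w => LinearMap.ext_ring (h w)

theorem comul_ins (x z : List (Option κ)) (a : Avs κ S) :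
    comul S (ins x z a) =
      T (fun p q => lmapDomain S S (fun q' => (p, q')) (ins q z a)) x +
      T (fun p q => lmapDomain S S (fun p' => (p', q)) (ins x p a)) z := by
  induction a using Finsupp.induction_linear with
  | zero => simp [T]
  | add f g hf hg => simp only [map_add, hf, hg, T_add]; abel
  | single c r =>
    have : (single c r : Avs κ S) = r • single c 1 := by simp
    rw [this]
    simp only [map_smul, ins_single, ← T_smul, ← smul_add]
    rw [comul_single, T_append_cons]
    simp

/-- The coderivation of degree `d` with components `φ`. -/
noncomputable def coder (d : ℤ) (φ : List (Option κ) → Avs κ S) : Module.End S (BW κ S) :=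
  Finsupp.lift (BW κ S) S (List (Option κ)) fun w =>
    T (fun x r => T (fun y z => sgn S (d * epsO dg x) • ins x z (φ y)) r) w

theorem coder_single (d : ℤ) (φ : List (Option κ) → Avs κ S) (w : List (Option κ)) :
    coder dg d φ (single w 1) =
      T (fun x r => T (fun y z => sgn S (d * epsO dg x) • ins x z (φ y)) r) w := by
  simp [coder]

theorem T_comm {α : Type} {M : Type*} [AddCommMonoid M]
    (f : List α → List α → List α → List α → M) (x r : List α) :
    T (fun y z => T (fun p q => f p q y z) x) r = T (fun p q => T (fun y z => f p q y z) r) x :=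
  Finset.sum_comm

theorem coder_isCoder (d : ℤ) (φ : List (Option κ) → Avs κ S) : IsCoder S dg d (coder dg d φ) := by
  apply end_ext
  intro w
  simp only [LinearMap.comp_apply, LinearMap.add_apply]
  rw [coder_single, comul_single]
  simp only [map_T, map_smul, comul_ins, tensL_single, tensR_single, coder_single, smul_add, T_add,
    T_smul]
  rw [add_comm]
  refine congrArg₂ (fun x y => x + y) ?_ ?_
  · rw [← T_assoc]
    refine T_congr fun x r _ => ?_
    rw [← T_assoc]
  · have := T_assoc (fun p q r => T (fun y z => sgn S (d * epsO dg p) •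
        sgn S (d * epsO dg q) • lmapDomain S S (fun q' => (p, q')) (ins q z (φ y) : BW κ S)) r) w
    rw [this]
    refine T_congr fun x r _ => ?_
    rw [T_comm]
    refine T_congr fun p q hpq => T_congr fun y z _ => ?_
    rw [← hpq, epsO_append, mul_add, sgn_add, mul_smul]

theorem proj1_ins (x z : List (Option κ)) (a : Avs κ S) :
    proj1 S (ins x z a) = if x = [] ∧ z = [] then a else 0 := by
  have : proj1 S ∘ₗ ins x z = if x = [] ∧ z = [] then LinearMap.id else (0 : Avs κ S →ₗ[S] Avs κ S) := by
    apply avs_ext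
    intro c
    rw [LinearMap.comp_apply, ins_single]
    ext e
    rw [proj1_apply, single_apply]
    rcases x with _ | ⟨x1, x⟩
    · rcases z with _ | ⟨z1, z⟩ <;> simp [single_apply]
    · simp
  have h2 := LinearMap.congr_fun this a
  rw [LinearMap.comp_apply] at h2
  rw [h2]
  split_ifs <;> rfl

theorem proj1_coder (d : ℤ) (φ : List (Option κ) → Avs κ S) (w : List (Option κ)) :
    proj1 S (coder dg d φ (single w 1)) = φ w := by
  rw [coder_single]
  simp only [map_T, map_smul, proj1_ins]
  rw [T_left, T_right]
  · simp [epsO_nil, sgn_zero]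
  · intro p q _ hq; simp [hq]
  · intro p q _ hp; apply T_eq_zero; intros; simp [hp]

theorem coder_congr_mod (J : Ideal S) (d : ℤ) {F : Module.End S (BW κ S)} (hF : IsCoder S dg d F)
    (h : ∀ w c, proj1 S (F (single w 1)) c ∈ J) : CoeffIn S J F := by
  apply coder_unique dg J d F _ h
  intro w p q
  have := congrArg (fun G => G (single w 1)) hF
  simp only [LinearMap.comp_apply, LinearMap.add_apply] at this
  rw [this]
  simp

theorem IsCoder.add' {d : ℤ} {F G : Module.End S (BW κ S)} (hF : IsCoder S dg d F)
    (hG : IsCoder S dg d G) : IsCoder S dg d (F + G) := by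
  unfold IsCoder at *
  rw [LinearMap.comp_add, hF, hG, tensL_add, tensR_add, LinearMap.add_comp, LinearMap.add_comp]
  abel

theorem IsCoder.smul' {d : ℤ} (r : S) {F : Module.End S (BW κ S)} (hF : IsCoder S dg d F) :
    IsCoder S dg d (r • F) := by
  unfold IsCoder at *
  rw [LinearMap.comp_smul, hF, tensL_smul, tensR_smul, LinearMap.smul_comp, LinearMap.smul_comp,
    smul_add]

theorem tensL_sub (F G : Module.End S (BW κ S)) : tensL S (F - G) = tensL S F - tensL S G := by
  apply end2_ext
  intro p q
  simp only [LinearMap.sub_apply, tensL_single, map_sub]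

theorem tensR_sub (d : ℤ) (F G : Module.End S (BW κ S)) :
    tensR S dg d (F - G) = tensR S dg d F - tensR S dg d G := by
  apply end2_ext
  intro p q
  simp only [LinearMap.sub_apply, tensR_single, map_sub, smul_sub]

theorem IsCoder.sub' {d : ℤ} {F G : Module.End S (BW κ S)} (hF : IsCoder S dg d F)
    (hG : IsCoder S dg d G) : IsCoder S dg d (F - G) := by
  unfold IsCoder at *
  rw [LinearMap.comp_sub, hF, hG, tensL_sub, tensR_sub, LinearMap.sub_comp, LinearMap.sub_comp]
  abel

theorem eq_coder {d : ℤ} {F : Module.End S (BW κ S)} (hF : IsCoder S dg d F) :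
    F = coder dg d (fun w => proj1 S (F (single w 1))) := by
  rw [← sub_eq_zero]
  apply end_eq_zero_of_coeffIn
  apply coder_congr_mod dg ⊥ d (hF.sub' dg (coder_isCoder dg d _))
  intro w c
  rw [LinearMap.sub_apply, map_sub, proj1_coder, sub_self]
  simp

theorem IsCoder.bracket {a b : ℤ} {F G : Module.End S (BW κ S)} (hF : IsCoder S dg a F)
    (hG : IsCoder S dg b G) (hF' : HomogEnd S dg a F) (hG' : HomogEnd S dg b G) :
    IsCoder S dg (a + b) (F * G - sgn S (a * b) • (G * F)) := by
  have key : ∀ (a b : ℤ) (F G : Module.End S (BW κ S)), IsCoder S dg a F → IsCoder S dg b G →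
      HomogEnd S dg b G →
      comul S ∘ₗ (F * G) = (tensL S F * tensL S G + tensL S F * tensR S dg b G
        + sgn S (a * b) • (tensL S G * tensR S dg a F) + tensR S dg a F * tensR S dg b G) ∘ₗ
        comul S := by
    intro a b F G hF hG hG'
    unfold IsCoder at *
    rw [Module.End.mul_eq_comp, ← LinearMap.comp_assoc, hF, LinearMap.add_comp,
      LinearMap.comp_assoc, LinearMap.comp_assoc, hG, mul_comm a b, ← tens_comm dg b a G F hG']
    ext1
    simp only [LinearMap.comp_add, LinearMap.add_comp, Module.End.mul_eq_comp,
      LinearMap.comp_assoc]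
    abel_nf
  unfold IsCoder
  rw [LinearMap.comp_sub, LinearMap.comp_smul, key a b F G hF hG hG', key b a G F hG hF hF']
  have e1 : tensL S (F * G - sgn S (a * b) • (G * F)) =
      tensL S F * tensL S G - sgn S (a * b) • (tensL S G * tensL S F) := by
    rw [tensL_sub, tensL_smul, tensL_mul, tensL_mul]
  have e2 : tensR S dg (a + b) (F * G - sgn S (a * b) • (G * F)) =
      tensR S dg a F * tensR S dg b G - sgn S (a * b) • (tensR S dg b G * tensR S dg a F) := by
    rw [tensR_sub, tensR_smul, tensR_mul, add_comm a b, tensR_mul]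
  rw [e1, e2, ← LinearMap.smul_comp, ← LinearMap.sub_comp, ← LinearMap.add_comp]
  congr 1
  rw [mul_comm b a]
  simp only [smul_add, smul_smul, sgn_mul_self, one_smul]
  abel

/-! ### homogeneity -/

theorem homogEnd_iff (d : ℤ) (F : Module.End S (BW κ S)) : HomogEnd S dg d F ↔
    ∀ w, F (single w 1) ∈ Finsupp.supported S S {ms | epsO dg ms = epsO dg w + d} :=
  Iff.rfl

theorem HomogEnd.add' {d : ℤ} {F G : Module.End S (BW κ S)} (hF : HomogEnd S dg d F)
    (hG : HomogEnd S dg d G) : HomogEnd S dg d (F + G) := by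
  rw [homogEnd_iff] at *
  exact fun w => Submodule.add_mem _ (hF w) (hG w)

theorem HomogEnd.smul' {d : ℤ} (r : S) {F : Module.End S (BW κ S)} (hF : HomogEnd S dg d F) :
    HomogEnd S dg d (r • F) := by
  rw [homogEnd_iff] at *
  exact fun w => Submodule.smul_mem _ _ (hF w)

theorem HomogEnd.sub' {d : ℤ} {F G : Module.End S (BW κ S)} (hF : HomogEnd S dg d F)
    (hG : HomogEnd S dg d G) : HomogEnd S dg d (F - G) := by
  rw [homogEnd_iff] at *
  exact fun w => Submodule.sub_mem _ (hF w) (hG w)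

theorem homogEnd_zero (d : ℤ) : HomogEnd S dg d (0 : Module.End S (BW κ S)) := by
  rw [homogEnd_iff]; exact fun w => Submodule.zero_mem _

theorem homogEnd_one : HomogEnd S dg 0 (1 : Module.End S (BW κ S)) := by
  intro w ms h
  rw [Module.End.one_apply] at h
  have := Finsupp.support_single_subset h
  simp at this
  simp [this]

theorem HomogEnd.mul' {a b : ℤ} {F G : Module.End S (BW κ S)} (hF : HomogEnd S dg a F)
    (hG : HomogEnd S dg b G) : HomogEnd S dg (a + b) (F * G) := by
  rw [homogEnd_iff]
  intro w
  rw [Module.End.mul_apply, ← Finsupp.sum_single (G (single w 1)), map_finsuppSum]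
  apply Submodule.sum_mem
  intro x hx
  have : (single x ((G (single w 1)) x) : BW κ S) = (G (single w 1)) x • single x 1 := by simp
  simp only [this, map_smul]
  apply Submodule.smul_mem
  have h1 := (homogEnd_iff dg a F).1 hF x
  have h2 := hG w x hx
  rw [h2] at h1
  convert h1 using 4
  ring_nf

/-- Homogeneous cochains. -/
def HomogC (d : ℤ) (φ : List (Option κ) → Avs κ S) : Prop :=
  ∀ w c, φ w c ≠ 0 → dgO dg c - 1 = epsO dg w + d

theorem HomogEnd.homogC {d : ℤ} {F : Module.End S (BW κ S)} (hF : HomogEnd S dg d F) :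
    HomogC dg d (fun w => proj1 S (F (single w 1))) := by
  intro w c h
  rw [proj1_apply] at h
  have := hF w [c] (by simpa using h)
  rw [← this]
  simp [epsO]

theorem HomogC.homogEnd {d : ℤ} {φ : List (Option κ) → Avs κ S} (h : HomogC dg d φ) :
    HomogEnd S dg d (coder dg d φ) := by
  rw [homogEnd_iff]
  intro w
  rw [coder_single]
  refine T_mem _ fun x r hxr => T_mem _ fun y z hyz => Submodule.smul_mem _ _ ?_
  rw [← Finsupp.sum_single (φ y), map_finsuppSum]
  apply Submodule.sum_mem
  intro c hc
  beta_reduce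
  rw [ins_single]
  apply Finsupp.single_mem_supported
  have := h y c (by simpa using hc)
  simp only [Set.mem_ofPred_eq]
  rw [← hxr, ← hyz, epsO_append, epsO_cons, epsO_append, epsO_append, this]
  ring

/-! ### cochain composition -/

/-- `a ↦ β(x a z)` -/
noncomputable def ext1 (β : List (Option κ) → Avs κ S) (x z : List (Option κ)) :
    Avs κ S →ₗ[S] Avs κ S := Finsupp.lift _ S _ fun c => β (x ++ c :: z)

theorem ext1_single (β : List (Option κ) → Avs κ S) (x z : List (Option κ)) (c : Option κ) :
    ext1 β x z (single c 1) = β (x ++ c :: z) := by simp [ext1]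

theorem ext1_eq_sum (β : List (Option κ) → Avs κ S) (x z : List (Option κ)) (a : Avs κ S) :
    ext1 β x z a = a.sum fun c r => r • β (x ++ c :: z) := by
  simp [ext1]

/-- `β{φ}(w) = Σ ± β(x φ(y) z)` -/
noncomputable def Mc (β : List (Option κ) → Avs κ S) (d : ℤ) (φ : List (Option κ) → Avs κ S)
    (w : List (Option κ)) : Avs κ S :=
  T (fun x r => T (fun y z => sgn S (d * epsO dg x) • ext1 β x z (φ y)) r) w

theorem proj1_comp (F : Module.End S (BW κ S)) (d : ℤ) (φ : List (Option κ) → Avs κ S)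
    (w : List (Option κ)) : proj1 S (F (coder dg d φ (single w 1))) =
      Mc dg (fun w => proj1 S (F (single w 1))) d φ w := by
  have : ∀ x z, proj1 S ∘ₗ F ∘ₗ ins x z = ext1 (fun w => proj1 S (F (single w 1))) x z := by
    intro x z
    apply avs_ext
    intro c
    rw [ext1_single, LinearMap.comp_apply, LinearMap.comp_apply, ins_single]
  have h2 : ∀ x z a, proj1 S (F (ins x z a)) = ext1 (fun w => proj1 S (F (single w 1))) x z a :=
    fun x z a => LinearMap.congr_fun (this x z) a
  rw [coder_single, Mc]
  simp only [map_T, map_smul, h2]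

end coder
end NCB


namespace NCB
section key
variable {S : Type} [CommRing S] {κ : Type} (dg : κ → ℤ)

theorem sgn_cases (S : Type) [CommRing S] (a : ℤ) : sgn S a = 1 ∨ sgn S a = -1 := by
  unfold sgn
  by_cases ha : Even a <;> simp [ha]

/-- The unit axioms for a cochain. -/
structure UnitC (β : List (Option κ) → Avs κ S) : Prop where
  h1 : β [none] = 0
  h2 : ∀ x, β [x, none] = sgn S (dgO dg x) • single x 1
  h3 : ∀ x, β [none, x] = single x 1
  h4 : ∀ ls : List (Option κ), 3 ≤ ls.length → none ∈ ls → β ls = 0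

noncomputable def McA (β : List (Option κ) → Avs κ S) (d : ℤ) (φ : List (Option κ) → Avs κ S)
    (u v : List (Option κ)) : Avs κ S :=
  T (fun x r => T (fun y z => sgn S (d * epsO dg x) • ext1 β x (z ++ none :: v) (φ y)) r) u

noncomputable def McB (β : List (Option κ) → Avs κ S) (d : ℤ) (φ : List (Option κ) → Avs κ S)
    (u v : List (Option κ)) : Avs κ S :=
  T (fun x y' => T (fun y'' z => sgn S (d * epsO dg x) • ext1 β x z (φ (y' ++ none :: y''))) v) u

noncomputable def McC (β : List (Option κ) → Avs κ S) (d : ℤ) (φ : List (Option κ) → Avs κ S)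
    (u v : List (Option κ)) : Avs κ S :=
  T (fun x r => T (fun y z => sgn S (d * epsO dg (u ++ none :: x)) •
    ext1 β (u ++ none :: x) z (φ y)) r) v

theorem Mc_split (β : List (Option κ) → Avs κ S) (d : ℤ) (φ : List (Option κ) → Avs κ S)
    (u v : List (Option κ)) :
    Mc dg β d φ (u ++ none :: v) = McA dg β d φ u v + McB dg β d φ u v + McC dg β d φ u v := by
  unfold Mc McA McB McC
  rw [T_append_cons, ← T_add]
  congr 1
  refine T_congr fun p q _ => ?_
  rw [T_append_cons]

theorem ext1_zero {β : List (Option κ) → Avs κ S} {x z : List (Option κ)}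
    (h : ∀ c, β (x ++ c :: z) = 0) (a : Avs κ S) : ext1 β x z a = 0 := by
  rw [ext1_eq_sum]
  exact Finset.sum_eq_zero fun c _ => by beta_reduce; rw [h, smul_zero]

theorem ext1_unit_right {β : List (Option κ) → Avs κ S} (hβ : UnitC dg β) {e : ℤ} {a : Avs κ S}
    (ha : ∀ c, a c ≠ 0 → dgO dg c - 1 = e) : ext1 β [] [none] a = sgn S (e + 1) • a := by
  rw [ext1_eq_sum]
  conv_rhs => rw [← Finsupp.sum_single a, Finsupp.smul_sum]
  refine Finsupp.sum_congr fun c hc => ?_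
  have := ha c (by simpa using hc)
  rw [List.nil_append, hβ.h2, ← this, sub_add_cancel]
  simp [mul_comm]

theorem ext1_unit_left {β : List (Option κ) → Avs κ S} (hβ : UnitC dg β) (a : Avs κ S) :
    ext1 β [none] [] a = a := by
  rw [ext1_eq_sum]
  conv_rhs => rw [← Finsupp.sum_single a]
  refine Finsupp.sum_congr fun c hc => ?_
  rw [List.singleton_append, hβ.h3]
  simp

theorem A_unit {β φ : List (Option κ) → Avs κ S} (hβ : UnitC dg β) {d : ℤ} (hφ : HomogC dg d φ)
    (u v : List (Option κ)) : McA dg β d φ u v =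
      if v = [] then sgn S (epsO dg u + d + 1) • φ u else 0 := by
  unfold McA
  rw [T_left, T_right]
  · rw [epsO_nil, mul_zero, sgn_zero, one_smul]
    split_ifs with h
    · subst h
      exact ext1_unit_right dg hβ (hφ u)
    · apply ext1_zero
      intro c
      apply hβ.h4
      · have := List.length_pos_iff.2 h
        simp; omega
      · simp
  · intro p q _ hq
    rw [ext1_zero, smul_zero]
    intro c
    apply hβ.h4
    · have := List.length_pos_iff.2 hq
      simp; omega
    · simp
  · intro p q _ hp
    refine T_eq_zero fun y z _ => ?_
    rw [ext1_zero, smul_zero]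
    intro c
    apply hβ.h4
    · have := List.length_pos_iff.2 hp
      simp; omega
    · simp

theorem C_unit {β φ : List (Option κ) → Avs κ S} (hβ : UnitC dg β) (d : ℤ)
    (u v : List (Option κ)) : McC dg β d φ u v = if u = [] then sgn S d • φ v else 0 := by
  unfold McC
  rw [T_left, T_right]
  · split_ifs with h
    · subst h
      rw [List.nil_append, ext1_unit_left dg hβ, epsO_cons, dgO_none, epsO_nil]
      simp [sgn_neg]
    · rw [ext1_zero, smul_zero]
      intro c
      apply hβ.h4
      · have := List.length_pos_iff.2 h
        simp; omega
      · simp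
  · intro p q _ hq
    rw [ext1_zero, smul_zero]
    intro c
    apply hβ.h4
    · have := List.length_pos_iff.2 hq
      simp; omega
    · simp
  · intro p q _ hp
    refine T_eq_zero fun y z _ => ?_
    rw [ext1_zero, smul_zero]
    intro c
    apply hβ.h4
    · have := List.length_pos_iff.2 hp
      simp; omega
    · simp

theorem B1_unit {β φ : List (Option κ) → Avs κ S} (hβ : UnitC dg β) (u v : List (Option κ)) :
    T (fun x y' => sgn S (1 * epsO dg x) • ext1 φ x v (β (y' ++ [none]))) u =
      if u = [] then 0 else - (sgn S (epsO dg u) • φ (u ++ v)) := by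
  rcases List.eq_nil_or_concat u with rfl | ⟨u0, a, rfl⟩
  · rw [T_nil]; simp [hβ.h1]
  · rw [List.concat_eq_append, T_append_cons, T_nil, T_right]
    · simp only [List.nil_append, hβ.h1, map_zero, smul_zero, add_zero, one_mul]
      rw [show [a] ++ [none] = [a, none] from rfl, hβ.h2, map_smul, ext1_single, epsO_append,
        epsO_cons, epsO_nil, sgn_add, add_zero, sgn_sub, sgn_one, smul_smul]
      simp
    · intro p q _ hq
      rw [hβ.h4, map_zero, smul_zero]
      · have := List.length_pos_iff.2 hq
        simp; omega
      · simp

theorem B_unit {β φ : List (Option κ) → Avs κ S} (hβ : UnitC dg β) (u v : List (Option κ)) :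
    McB dg φ 1 β u v = sgn S (epsO dg u) • ((if v = [] then 0 else φ (u ++ v)) -
      (if u = [] then 0 else φ (u ++ v))) := by
  unfold McB
  cases v with
  | nil =>
    simp only [T_nil]
    rw [B1_unit dg hβ]
    by_cases h : u = [] <;> simp [h]
  | cons c v =>
    simp only [T_cons]
    rw [T_add, B1_unit dg hβ]
    have h2 : T (fun x y' => T (fun p q => sgn S (1 * epsO dg x) •
        ext1 φ x q (β (y' ++ none :: c :: p))) v) u = sgn S (epsO dg u) • φ (u ++ c :: v) := by
      rw [T_right, T_left]
      · rw [List.nil_append, hβ.h3, ext1_single, one_mul]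
      · intro p q _ hp
        rw [hβ.h4, map_zero, smul_zero]
        · have := List.length_pos_iff.2 hp
          simp; omega
        · simp
      · intro p q _ hq
        refine T_eq_zero fun y z _ => ?_
        rw [hβ.h4, map_zero, smul_zero]
        · have := List.length_pos_iff.2 hq
          simp; omega
        · simp
    rw [h2]
    by_cases h : u = []
    · simp [h]
    · simp [h]

/-- The commutator of a unital structure with a cochain vanishing on enough words with units. -/
theorem K13 {β φ : List (Option κ) → Avs κ S} (hβ : UnitC dg β) {d : ℤ} (hφ : HomogC dg d φ)
    (u v : List (Option κ)) (hA : McA dg φ 1 β u v = 0) (hC : McC dg φ 1 β u v = 0)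
    (hB : McB dg β d φ u v = 0) :
    Mc dg β d φ (u ++ none :: v) - sgn S d • Mc dg φ 1 β (u ++ none :: v) = 0 := by
  rw [Mc_split, Mc_split, hA, hB, hC, A_unit dg hβ hφ, B_unit dg hβ, C_unit dg hβ]
  rw [sgn_add, sgn_add, sgn_one]
  by_cases hu : u = [] <;> by_cases hv : v = [] <;>
  rcases sgn_cases S d with h | h <;> rcases sgn_cases S (epsO dg u) with h' | h' <;>
  simp [hu, hv, h, h', epsO_nil, sgn_zero]

/-! ### the contracting homotopy -/

/-- Insertion of the unit at position `j`. -/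
noncomputable def hj (j : ℕ) (φ : List (Option κ) → Avs κ S) (w : List (Option κ)) : Avs κ S :=
  if j ≤ w.length then sgn S (epsO dg (w.take j)) • φ (w.take j ++ none :: w.drop j) else 0

/-- Cochains vanishing if one of the first `j` arguments is the unit. -/
def Fj (j : ℕ) (φ : List (Option κ) → Avs κ S) : Prop :=
  ∀ u v, u.length < j → φ (u ++ none :: v) = 0

theorem hj_append (φ : List (Option κ) → Avs κ S) (u t : List (Option κ)) :
    hj dg u.length φ (u ++ t) = sgn S (epsO dg u) • φ (u ++ none :: t) := by
  simp [hj]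

theorem hj_short {j : ℕ} (φ : List (Option κ) → Avs κ S) {w : List (Option κ)}
    (h : w.length < j) : hj dg j φ w = 0 := by
  simp [hj, h]

theorem hj_F {j : ℕ} {φ : List (Option κ) → Avs κ S} (h : Fj j φ) : Fj j (hj dg j φ) := by
  intro u v hu
  unfold hj
  split_ifs with hl
  · have : (u ++ none :: v).take j = u ++ none :: v.take (j - u.length - 1) := by
      rw [List.take_append, List.take_of_length_le hu.le]
      obtain ⟨n, hn⟩ : ∃ n, j - u.length = n + 1 := ⟨j - u.length - 1, by omega⟩
      rw [hn]; simp
    rw [this, List.append_assoc, List.cons_append, h _ _ hu, smul_zero]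
  · rfl

theorem hj_homog {j : ℕ} {d : ℤ} {φ : List (Option κ) → Avs κ S} (h : HomogC dg d φ) :
    HomogC dg (d - 1) (hj dg j φ) := by
  intro w c hc
  unfold hj at hc
  split_ifs at hc with hl
  · rw [h (w.take j ++ none :: w.drop j) c (fun h0 => hc (by simp [h0]))]
    rw [epsO_append, epsO_cons, dgO_none]
    conv_rhs => rw [← List.take_append_drop j w, epsO_append]
    ring
  · simp at hc

theorem A2 {j : ℕ} {β φ : List (Option κ) → Avs κ S} (hβ1 : HomogC dg 1 β) (hβ0 : β [] = 0)
    (hF : Fj j φ) (u v : List (Option κ)) (hu : u.length = j) :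
    McA dg (hj dg j φ) 1 β u v = - (sgn S (epsO dg u) • McA dg φ 1 β u (none :: v)) := by
  unfold McA
  rw [T_smul, ← T_neg]
  refine T_congr fun x r hxr => ?_
  rw [T_smul, ← T_neg]
  refine T_congr fun y z hyz => ?_
  have hlen : x.length + y.length + z.length = j := by
    rw [← hu, ← hxr, ← hyz]; simp; omega
  match y with
  | [] => simp [hβ0]
  | a :: b :: t =>
    simp only [List.length_cons] at hlen
    rw [ext1_zero, ext1_zero]
    · simp
    · intro c
      have := hF (x ++ c :: z) (none :: v) (by simp; omega)
      simpa using this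
    · intro c
      have := hj_F dg hF (x ++ c :: z) v (by simp; omega)
      simpa using this
  | [a] =>
    simp only [List.length_cons, List.length_nil] at hlen
    rw [smul_comm, ← smul_neg]
    congr 1
    rw [ext1_eq_sum, ext1_eq_sum, Finsupp.smul_sum, ← Finsupp.sum_neg]
    refine Finsupp.sum_congr fun c hc => ?_
    have hd := hβ1 [a] c (by simpa using hc)
    have hj' : (x ++ c :: z).length = j := by simp; omega
    have := hj_append dg φ (x ++ c :: z) (none :: v)
    rw [hj', List.append_assoc, List.cons_append] at this
    rw [this, smul_comm, ← neg_smul]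
    congr 2
    · rw [← hxr, ← hyz, epsO_append, epsO_cons, hd, epsO_append, epsO_append]
      rw [show epsO dg x + (epsO dg [a] + 1 + epsO dg z) = epsO dg x + (epsO dg [a] + epsO dg z) + 1
        by ring, sgn_add S _ 1, sgn_one]
      simp
    · simp

theorem C2 {j : ℕ} {β φ : List (Option κ) → Avs κ S} (u v : List (Option κ)) (hu : u.length = j) :
    McC dg (hj dg j φ) 1 β u v =
      - (sgn S (epsO dg u) • T (fun x r => T (fun y z => sgn S (1 * epsO dg (u ++ none :: none :: x)) •
    ext1 φ (u ++ none :: none :: x) z (β y)) r) v) := by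
  unfold McC
  rw [T_smul, ← T_neg]
  refine T_congr fun x r hxr => ?_
  rw [T_smul, ← T_neg]
  refine T_congr fun y z hyz => ?_
  have : ext1 (hj dg j φ) (u ++ none :: x) z (β y) =
      sgn S (epsO dg u) • ext1 φ (u ++ none :: none :: x) z (β y) := by
    rw [ext1_eq_sum, ext1_eq_sum, Finsupp.smul_sum]
    refine Finsupp.sum_congr fun c hc => ?_
    have := hj_append dg φ u (none :: x ++ c :: z)
    rw [hu, ← List.append_assoc] at this
    rw [this, smul_comm]
    simp
  rw [this, smul_comm, ← smul_neg, ← neg_smul]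
  congr 2
  simp only [epsO_append, epsO_cons, dgO_none, sgn_add, sgn_sub, sgn_one, sgn_zero, one_mul]
  ring

theorem C4 {β φ : List (Option κ) → Avs κ S} (hβ : UnitC dg β) (hβ0 : β [] = 0)
    (u v : List (Option κ)) :
    McC dg φ 1 β u (none :: v) =
      (if v = [] then 0 else - (sgn S (epsO dg u) • φ (u ++ none :: v))) +
      T (fun x r => T (fun y z => sgn S (1 * epsO dg (u ++ none :: none :: x)) •
        ext1 φ (u ++ none :: none :: x) z (β y)) r) v := by
  unfold McC
  rw [T_cons]
  congr 1
  rw [T_cons, hβ0, map_zero, smul_zero, zero_add]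
  cases v with
  | nil => rw [T_nil, hβ.h1]; simp
  | cons c v =>
    rw [T_cons, hβ.h1, map_zero, smul_zero, zero_add, T_left]
    · rw [hβ.h3, ext1_single, epsO_append, epsO_cons, epsO_nil, dgO_none, one_mul, sgn_add]
      simp [sgn_neg, sgn_one]
    · intro p q _ hp
      rw [hβ.h4, map_zero, smul_zero]
      · have := List.length_pos_iff.2 hp
        simp; omega
      · simp

theorem B5 {j : ℕ} {β φ : List (Option κ) → Avs κ S} (hβ : UnitC dg β) (hφ : HomogC dg 0 φ)
    (hF : Fj j φ) (u v : List (Option κ)) (hu : u.length = j) :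
    McB dg β 0 φ u (none :: v) = (if v = [] then sgn S (epsO dg u) • φ (u ++ [none]) else 0) +
      T (fun y z => ext1 β [] z (φ (u ++ none :: none :: y))) v := by
  unfold McB
  rw [T_left, T_cons]
  · simp only [zero_mul, sgn_zero, one_smul]
    congr 1
    split_ifs with h
    · subst h
      rw [ext1_unit_right dg hβ (hφ (u ++ [none]))]
      congr 2
      rw [epsO_append, epsO_cons, dgO_none, epsO_nil]; ring
    · apply ext1_zero
      intro c
      apply hβ.h4
      · have := List.length_pos_iff.2 h
        simp; omega
      · simp
  · intro x y hxy hx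
    refine T_eq_zero fun y'' z _ => ?_
    rw [hF, map_zero, smul_zero]
    have := List.length_pos_iff.2 hx
    rw [← hu, ← hxy]
    simp; omega

theorem B6 {j : ℕ} {β φ : List (Option κ) → Avs κ S}
    (hF : Fj j φ) (u v : List (Option κ)) (hu : u.length = j) :
    McB dg β (-1) (hj dg j φ) u v =
      sgn S (epsO dg u) • T (fun y z => ext1 β [] z (φ (u ++ none :: none :: y))) v := by
  unfold McB
  rw [T_left, T_smul]
  · refine T_congr fun y z _ => ?_
    have := hj_append dg φ u (none :: y)
    rw [hu] at this
    rw [this, map_smul]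
    simp [epsO_nil, sgn_zero]
  · intro x y hxy hx
    refine T_eq_zero fun y'' z _ => ?_
    rw [hj_F dg hF, map_zero, smul_zero]
    have := List.length_pos_iff.2 hx
    rw [← hu, ← hxy]
    simp; omega

/-- Differential of degree `0` cochains. -/
noncomputable def d0 (β φ : List (Option κ) → Avs κ S) (w : List (Option κ)) : Avs κ S :=
  Mc dg β 0 φ w - Mc dg φ 1 β w

/-- Differential of degree `-1` cochains. -/
noncomputable def d1 (β φ : List (Option κ) → Avs κ S) (w : List (Option κ)) : Avs κ S :=
  Mc dg β (-1) φ w + Mc dg φ 1 β w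

theorem K2 {j : ℕ} {β φ : List (Option κ) → Avs κ S} (hβ : UnitC dg β)
    (hβ1 : HomogC dg 1 β) (hβ0 : β [] = 0) (hφ : HomogC dg 0 φ)
    (hF : Fj j φ) (u v : List (Option κ)) (hu : u.length = j) :
    d1 dg β (hj dg j φ) (u ++ none :: v) =
      sgn S (epsO dg u) • d0 dg β φ (u ++ none :: none :: v) - φ (u ++ none :: v) := by
  unfold d1 d0
  rw [Mc_split, Mc_split, Mc_split, Mc_split]
  have hh : HomogC dg (-1) (hj dg j φ) := by
    have := hj_homog dg (j := j) hφ
    simpa using this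
  rw [A2 dg hβ1 hβ0 hF u v hu, C2 dg u v hu, C4 dg hβ hβ0, B5 dg hβ hφ hF u v hu,
    B6 dg hF u v hu, A_unit dg hβ hh, A_unit dg hβ hφ, B_unit dg hβ, B_unit dg hβ, C_unit dg hβ,
    C_unit dg hβ]
  generalize (T (fun y z => ext1 β [] z (φ (u ++ none :: none :: y))) v) = t1
  generalize (T (fun x r => T (fun y z => sgn S (1 * epsO dg (u ++ none :: none :: x)) •
    ext1 φ (u ++ none :: none :: x) z (β y)) r) v) = t2
  generalize McA dg φ 1 β u (none :: v) = t3
  have e1 := hj_append dg φ u v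
  have e2 := hj_append dg φ u []
  rw [hu] at e1 e2
  rw [List.append_nil] at e2
  rw [e1, e2, sgn_neg, sgn_one, sgn_zero]
  rw [show epsO dg u + -1 + 1 = epsO dg u by ring]
  by_cases hu' : u = []
  · subst hu'
    rw [List.nil_append] at e1
    rw [e1]
    simp only [epsO_nil, sgn_zero]
    by_cases hv : v = []
    · subst hv; simp; abel
    · simp [hv]; abel
  · by_cases hv : v = []
    · subst hv
      simp only [hu', if_true, if_false]
      rcases sgn_cases S (epsO dg u) with h | h <;> rw [h] <;> simp <;> abel
    · simp only [hu', hv, if_false]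
      rcases sgn_cases S (epsO dg u) with h | h <;> rw [h] <;> simp <;> abel

/-- `Fj` is preserved by the differential. -/
theorem K3 {j : ℕ} {β φ : List (Option κ) → Avs κ S} (hβ : UnitC dg β) (hβ0 : β [] = 0)
    (hφ : HomogC dg (-1) φ) (hF : Fj j φ) : Fj j (d1 dg β φ) := by
  intro u v hu
  unfold d1
  have := K13 dg hβ hφ u v ?_ ?_ ?_
  · simpa [sgn_neg, sgn_one] using this
  · refine T_eq_zero fun x r hxr => T_eq_zero fun y z hyz => ?_
    cases y with
    | nil => simp [hβ0]
    | cons a y =>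
      rw [ext1_zero, smul_zero]
      intro c
      have := hF (x ++ c :: z) v (by
        rw [← hxr, ← hyz] at hu; simp at hu ⊢; omega)
      simpa using this
  · refine T_eq_zero fun x r hxr => T_eq_zero fun y z hyz => ?_
    rw [ext1_zero, smul_zero]
    intro c
    have := hF u (x ++ c :: z) hu
    simpa using this
  · refine T_eq_zero fun x r hxr => T_eq_zero fun y z hyz => ?_
    rw [hF, map_zero, smul_zero]
    rw [← hxr] at hu; simp at hu; omega

/-- Commutator of a unital structure with a normalized cochain is normalized. -/
theorem K1 {β φ : List (Option κ) → Avs κ S} (hβ : UnitC dg β)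
    (hφ : HomogC dg 0 φ) (hF : ∀ w, none ∈ w → φ w = 0) (w : List (Option κ)) (hw : none ∈ w) :
    Mc dg β 0 φ w - Mc dg φ 1 β w = 0 := by
  obtain ⟨u, v, rfl⟩ := List.append_of_mem hw
  have := K13 dg hβ hφ u v ?_ ?_ ?_
  · simpa [sgn_zero] using this
  · refine T_eq_zero fun x r hxr => T_eq_zero fun y z hyz => ?_
    rw [ext1_zero, smul_zero]
    intro c
    apply hF; simp
  · refine T_eq_zero fun x r hxr => T_eq_zero fun y z hyz => ?_
    rw [ext1_zero, smul_zero]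
    intro c
    apply hF; simp
  · refine T_eq_zero fun x r hxr => T_eq_zero fun y z hyz => ?_
    rw [hF, map_zero, smul_zero]
    simp

end key
end NCB


namespace NCB
section acyc
variable {S : Type} [CommRing S] {κ : Type} (dg : κ → ℤ)

/-- Vectors with coordinates in an ideal. -/
def vJ (J : Ideal S) : Submodule S (Avs κ S) where
  carrier := {a | ∀ c, a c ∈ J}
  add_mem' := fun ha hb c => J.add_mem (ha c) (hb c)
  zero_mem' := fun _ => J.zero_mem
  smul_mem' := fun r _ ha c => J.mul_mem_left r (ha c)

theorem mem_vJ {J : Ideal S} {a : Avs κ S} : a ∈ vJ J ↔ ∀ c, a c ∈ J := Iff.rfl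

theorem ext1_mem_right {J : Ideal S} (β : List (Option κ) → Avs κ S) (x z : List (Option κ))
    {a : Avs κ S} (ha : a ∈ vJ J) : ext1 β x z a ∈ vJ J := by
  rw [ext1_eq_sum]
  refine Submodule.sum_mem _ fun c _ => ?_
  intro c'
  exact J.mul_mem_right _ (ha c)

theorem ext1_mem_left {J : Ideal S} {β : List (Option κ) → Avs κ S} (h : ∀ w, β w ∈ vJ J)
    (x z : List (Option κ)) (a : Avs κ S) : ext1 β x z a ∈ vJ J := by
  rw [ext1_eq_sum]
  exact Submodule.sum_mem _ fun c _ => Submodule.smul_mem _ _ (h _)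

theorem Mc_mem_right {J : Ideal S} (β : List (Option κ) → Avs κ S) (d : ℤ)
    {φ : List (Option κ) → Avs κ S} (h : ∀ w, φ w ∈ vJ J) (w) : Mc dg β d φ w ∈ vJ J :=
  T_mem _ fun _ _ _ => T_mem _ fun _ _ _ => Submodule.smul_mem _ _ (ext1_mem_right _ _ _ (h _))

theorem Mc_mem_left {J : Ideal S} {β : List (Option κ) → Avs κ S} (d : ℤ)
    (φ : List (Option κ) → Avs κ S) (h : ∀ w, β w ∈ vJ J) (w) : Mc dg β d φ w ∈ vJ J :=
  T_mem _ fun _ _ _ => T_mem _ fun _ _ _ => Submodule.smul_mem _ _ (ext1_mem_left h _ _ _)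

theorem ext1_add_left (β β' : List (Option κ) → Avs κ S) (x z : List (Option κ)) :
    ext1 (β + β') x z = ext1 β x z + ext1 β' x z := by
  apply avs_ext
  intro c
  simp [ext1_single]

theorem Mc_add_left (β β' : List (Option κ) → Avs κ S) (d : ℤ) (φ : List (Option κ) → Avs κ S) (w) :
    Mc dg (β + β') d φ w = Mc dg β d φ w + Mc dg β' d φ w := by
  unfold Mc
  rw [← T_add]
  refine T_congr fun x r _ => ?_
  rw [← T_add]
  refine T_congr fun y z _ => ?_
  rw [ext1_add_left, LinearMap.add_apply, smul_add]

theorem Mc_add_right (β : List (Option κ) → Avs κ S) (d : ℤ) (φ φ' : List (Option κ) → Avs κ S) (w) :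
    Mc dg β d (φ + φ') w = Mc dg β d φ w + Mc dg β d φ' w := by
  unfold Mc
  rw [← T_add]
  refine T_congr fun x r _ => ?_
  rw [← T_add]
  refine T_congr fun y z _ => ?_
  rw [Pi.add_apply, map_add, smul_add]

theorem d0_add (β φ φ' : List (Option κ) → Avs κ S) (w) :
    d0 dg β (φ + φ') w = d0 dg β φ w + d0 dg β φ' w := by
  unfold d0
  rw [Mc_add_left, Mc_add_right]; abel

theorem d1_add (β φ φ' : List (Option κ) → Avs κ S) (w) :
    d1 dg β (φ + φ') w = d1 dg β φ w + d1 dg β φ' w := by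
  unfold d1
  rw [Mc_add_left, Mc_add_right]; abel

theorem d0_mem {J : Ideal S} (β : List (Option κ) → Avs κ S)
    {φ : List (Option κ) → Avs κ S} (h : ∀ w, φ w ∈ vJ J) (w) : d0 dg β φ w ∈ vJ J :=
  Submodule.sub_mem _ (Mc_mem_right dg _ _ h _) (Mc_mem_left dg _ _ h _)

theorem d1_mem {J : Ideal S} (β : List (Option κ) → Avs κ S)
    {φ : List (Option κ) → Avs κ S} (h : ∀ w, φ w ∈ vJ J) (w) : d1 dg β φ w ∈ vJ J :=
  Submodule.add_mem _ (Mc_mem_right dg _ _ h _) (Mc_mem_left dg _ _ h _)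

theorem hj_mem {J : Ideal S} (j : ℕ)
    {φ : List (Option κ) → Avs κ S} (h : ∀ w, φ w ∈ vJ J) (w) : hj dg j φ w ∈ vJ J := by
  unfold hj
  split_ifs
  · exact Submodule.smul_mem _ _ (h _)
  · exact Submodule.zero_mem _

theorem hj_add (j : ℕ) (φ φ' : List (Option κ) → Avs κ S) :
    hj dg j (φ + φ') = hj dg j φ + hj dg j φ' := by
  funext w
  simp only [hj, Pi.add_apply]
  split_ifs
  · rw [smul_add]
  · simp

theorem HomogC.add' {d : ℤ} {φ φ' : List (Option κ) → Avs κ S} (h : HomogC dg d φ)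
    (h' : HomogC dg d φ') : HomogC dg d (φ + φ') := by
  intro w c hc
  by_cases h0 : φ w c = 0
  · exact h' w c (by simpa [h0] using hc)
  · exact h w c h0

/-- Components of an endomorphism. -/
noncomputable def pc (D : Module.End S (BW κ S)) (w : List (Option κ)) : Avs κ S :=
  proj1 S (D (single w 1))

theorem pc_coder (d : ℤ) (φ : List (Option κ) → Avs κ S) : pc (coder dg d φ) = φ :=
  funext fun w => proj1_coder dg d φ w

theorem eq_coder_pc {d : ℤ} {F : Module.End S (BW κ S)} (hF : IsCoder S dg d F) :
    F = coder dg d (pc F) := eq_coder dg hF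

theorem pc_mul {d : ℤ} (F : Module.End S (BW κ S)) {G : Module.End S (BW κ S)}
    (hG : IsCoder S dg d G) (w) : pc (F * G) w = Mc dg (pc F) d (pc G) w := by
  conv_lhs => rw [eq_coder_pc dg hG]
  exact proj1_comp dg F d _ w

theorem pc_add (F G : Module.End S (BW κ S)) (w) : pc (F + G) w = pc F w + pc G w := by
  simp [pc]

theorem pc_sub (F G : Module.End S (BW κ S)) (w) : pc (F - G) w = pc F w - pc G w := by
  simp [pc]

theorem coder_d1 {D : Module.End S (BW κ S)} (hD : IsCoder S dg 1 D) (hD' : HomogEnd S dg 1 D)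
    {ψ : List (Option κ) → Avs κ S} (hψ : HomogC dg (-1) ψ) :
    IsCoder S dg 0 (D * coder dg (-1) ψ + coder dg (-1) ψ * D) ∧
    HomogEnd S dg 0 (D * coder dg (-1) ψ + coder dg (-1) ψ * D) ∧
    pc (D * coder dg (-1) ψ + coder dg (-1) ψ * D) = d1 dg (pc D) ψ := by
  refine ⟨?_, ?_, ?_⟩
  · have := IsCoder.bracket dg hD (coder_isCoder dg (-1) ψ) hD' (hψ.homogEnd dg)
    rw [mul_neg, one_mul, sgn_neg, sgn_one, add_neg_cancel] at this
    convert this using 1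
    refine LinearMap.ext fun v => ?_
    simp
  · have h1 := HomogEnd.mul' dg hD' (hψ.homogEnd dg)
    have h2 := HomogEnd.mul' dg (hψ.homogEnd dg) hD'
    exact HomogEnd.add' dg (by simpa using h1) (by simpa using h2)
  · funext w
    rw [pc_add, pc_mul dg _ (coder_isCoder dg (-1) ψ), pc_mul dg _ hD, pc_coder]
    rfl

theorem d0_d1 {D : Module.End S (BW κ S)} (hD : IsCoder S dg 1 D) (hD' : HomogEnd S dg 1 D)
    (hDD : D * D = 0) {ψ : List (Option κ) → Avs κ S} (hψ : HomogC dg (-1) ψ) (w) :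
    d0 dg (pc D) (d1 dg (pc D) ψ) w = 0 := by
  obtain ⟨h1, h2, h3⟩ := coder_d1 dg hD hD' hψ
  rw [← h3]
  unfold d0
  rw [← pc_mul dg _ h1, ← pc_mul dg _ hD, ← pc_sub]
  have : D * (D * coder dg (-1) ψ + coder dg (-1) ψ * D) -
      (D * coder dg (-1) ψ + coder dg (-1) ψ * D) * D = 0 := by
    rw [mul_add, add_mul, ← mul_assoc, hDD, mul_assoc (coder dg (-1) ψ), hDD, mul_zero, zero_mul, zero_add,
      add_zero, mul_assoc]
    exact sub_self (G := Module.End S (BW κ S)) _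
  rw [this]; simp [pc]

/-- The partial homotopies. -/
noncomputable def sH (β φ : List (Option κ) → Avs κ S) : ℕ → List (Option κ) → Avs κ S
  | 0 => 0
  | n + 1 => sH β φ n + hj dg n (φ + d1 dg β (sH β φ n))

theorem sH_stable (β φ : List (Option κ) → Avs κ S) (w : List (Option κ)) (n : ℕ)
    (h : w.length < n) : sH dg β φ n w = sH dg β φ (w.length + 1) w := by
  induction n with
  | zero => omega
  | succ n ih =>
    rcases Nat.lt_or_ge w.length n with h' | h'
    · rw [← ih h', sH, Pi.add_apply, hj_short dg _ h', add_zero]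
    · have : n = w.length := by omega
      rw [this]

theorem d1_local {β : List (Option κ) → Avs κ S} (hβ0 : β [] = 0) {φ φ' : List (Option κ) → Avs κ S}
    (w : List (Option κ)) (h : ∀ v : List (Option κ), v.length ≤ w.length → φ v = φ' v) :
    d1 dg β φ w = d1 dg β φ' w := by
  unfold d1 Mc
  congr 1
  · refine T_congr fun x r hx => T_congr fun y z hy => ?_
    rw [h y (by rw [← hx, ← hy]; simp; omega)]
  · refine T_congr fun x r hx => T_congr fun y z hy => ?_
    cases y with
    | nil => simp [hβ0]
    | cons a y =>
      rw [ext1_eq_sum, ext1_eq_sum]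
      congr 1
      refine Finsupp.sum_congr fun c _ => ?_
      rw [h (x ++ c :: z) (by rw [← hx, ← hy]; simp)]

theorem d1_neg (β φ : List (Option κ) → Avs κ S) (w) : d1 dg β (-φ) w = - d1 dg β φ w := by
  have h0 : d1 dg β 0 w = 0 := by
    have := d1_add dg β 0 0 w
    rw [add_zero] at this
    simpa using this
  have := d1_add dg β φ (-φ) w
  rw [add_neg_cancel, h0] at this
  exact (neg_eq_of_add_eq_zero_right this.symm).symm

theorem acyclic {D : Module.End S (BW κ S)} (hD : IsCoder S dg 1 D) (hD' : HomogEnd S dg 1 D)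
    (hDD : D * D = 0) (hU : UnitC dg (pc D)) (h0 : pc D [] = 0) (I J : Ideal S)
    {φ : List (Option κ) → Avs κ S} (hφ : HomogC dg 0 φ) (hI : ∀ w, φ w ∈ vJ I)
    (hJ : ∀ w, none ∈ w → d0 dg (pc D) φ w ∈ vJ J) :
    ∃ ψ : List (Option κ) → Avs κ S, HomogC dg (-1) ψ ∧ (∀ w, ψ w ∈ vJ I) ∧
      ∀ w, none ∈ w → φ w - d1 dg (pc D) ψ w ∈ vJ J := by
  set β := pc D with hβ
  have hβ1 : HomogC dg 1 β := HomogEnd.homogC dg hD'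
  have hh : ∀ {ψ}, HomogC dg (-1) ψ → HomogC dg 0 (d1 dg β ψ) := by
    intro ψ hψ
    obtain ⟨_, h2, h3⟩ := coder_d1 dg hD hD' hψ
    rw [← h3]; exact HomogEnd.homogC dg h2
  have inv1 : ∀ n, HomogC dg (-1) (sH dg β φ n) ∧ ∀ w, sH dg β φ n w ∈ vJ I := by
    intro n
    induction n with
    | zero => exact ⟨fun w c h => by simp [sH] at h, fun w => Submodule.zero_mem _⟩
    | succ n ih =>
      refine ⟨HomogC.add' dg ih.1 ?_, fun w => Submodule.add_mem _ (ih.2 w) (hj_mem dg n ?_ w)⟩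
      · have := hj_homog dg (j := n) (HomogC.add' dg hφ (hh ih.1))
        simpa using this
      · exact fun w => Submodule.add_mem _ (hI w) (d1_mem dg β ih.2 w)
  have inv2 : ∀ n, ∀ u v : List (Option κ), u.length < n →
      (φ + d1 dg β (sH dg β φ n)) (u ++ none :: v) ∈ vJ J := by
    intro n
    induction n with
    | zero => intro u v h; omega
    | succ n ih =>
      set χ := φ + d1 dg β (sH dg β φ n) with hχ
      have hχ0 : HomogC dg 0 χ := HomogC.add' dg hφ (hh (inv1 n).1)
      have e1 : ∀ w, (φ + d1 dg β (sH dg β φ (n + 1))) w = χ w + d1 dg β (hj dg n χ) w := by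
        intro w
        rw [sH, Pi.add_apply, d1_add, hχ, Pi.add_apply, add_assoc]
      have e2 : ∀ w, none ∈ w → d0 dg β χ w ∈ vJ J := by
        intro w hw
        rw [hχ, d0_add, d0_d1 dg hD hD' hDD (inv1 n).1, add_zero]
        exact hJ w hw
      set χ' : List (Option κ) → Avs κ S := fun w => if none ∈ w.take n then 0 else χ w with hχ'
      set δ := χ - χ' with hδ
      have hsum : χ = χ' + δ := by simp [hδ]
      have hF : Fj n χ' := by
        intro u v hu
        have : none ∈ (u ++ none :: v).take n := by
          rw [List.take_append, List.mem_append]; right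
          obtain ⟨t, ht⟩ : ∃ t, n - u.length = t + 1 := ⟨n - u.length - 1, by omega⟩
          rw [ht]; simp
        simp only [hχ', this, if_true]
      have hδJ : ∀ w, δ w ∈ vJ J := by
        intro w
        simp only [hδ, hχ', Pi.sub_apply]
        split_ifs with h
        · rw [sub_zero]
          obtain ⟨u, v, huv⟩ := List.append_of_mem h
          have hl : u.length < n := by
            have := congrArg List.length huv
            simp only [List.length_take, List.length_append, List.length_cons] at this
            omega
          have := ih u (v ++ w.drop n) hl
          rwa [← List.cons_append, ← List.append_assoc, ← huv, List.take_append_drop] at this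
        · rw [sub_self]; exact Submodule.zero_mem _
      have hχ'0 : HomogC dg 0 χ' := by
        intro w c hc
        simp only [hχ'] at hc
        split_ifs at hc with h
        · simp at hc
        · exact hχ0 w c hc
      intro u v hu
      rw [e1]
      have e3 : d1 dg β (hj dg n χ) (u ++ none :: v) = d1 dg β (hj dg n χ') (u ++ none :: v) +
          d1 dg β (hj dg n δ) (u ++ none :: v) := by
        conv_lhs => rw [hsum, hj_add, d1_add]
      have e4 := d1_mem dg β (hj_mem dg n hδJ) (u ++ none :: v)
      have hhom : HomogC dg (-1) (hj dg n χ') := by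
        have := hj_homog dg (j := n) hχ'0
        simpa using this
      rcases Nat.lt_or_ge u.length n with h | h
      · rw [e3, K3 dg hU h0 hhom (hj_F dg hF) u v h, zero_add]
        exact Submodule.add_mem _ (ih u v h) e4
      · have hun : u.length = n := by omega
        rw [e3, K2 dg hU hβ1 h0 hχ'0 hF u v hun]
        have e5 : d0 dg β χ' (u ++ none :: none :: v) ∈ vJ J := by
          have a := e2 (u ++ none :: none :: v) (by simp)
          rw [hsum, d0_add] at a
          exact (Submodule.add_mem_iff_left _ (d0_mem dg β hδJ _)).1 a
        have e6 : χ (u ++ none :: v) + (sgn S (epsO dg u) • d0 dg β χ' (u ++ none :: none :: v)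
            - χ' (u ++ none :: v) + d1 dg β (hj dg n δ) (u ++ none :: v)) =
            δ (u ++ none :: v) + sgn S (epsO dg u) • d0 dg β χ' (u ++ none :: none :: v) +
            d1 dg β (hj dg n δ) (u ++ none :: v) := by
          rw [hδ, Pi.sub_apply]; abel
        rw [e6]
        exact Submodule.add_mem _ (Submodule.add_mem _ (hδJ _) (Submodule.smul_mem _ _ e5)) e4
  refine ⟨fun w => - sH dg β φ (w.length + 1) w, ?_, ?_, ?_⟩
  · intro w c hc
    exact (inv1 (w.length + 1)).1 w c (by simpa using hc)
  · exact fun w => Submodule.neg_mem _ ((inv1 _).2 w)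
  · intro w hw
    obtain ⟨u, v, rfl⟩ := List.append_of_mem hw
    have := inv2 ((u ++ none :: v).length + 1) u v (by simp)
    rw [d1_local dg h0 (φ' := - sH dg β φ ((u ++ none :: v).length + 1)), d1_neg, sub_neg_eq_add]
    · exact this
    · intro w' hw'
      rw [Pi.neg_apply, sH_stable dg β φ w' _ (Nat.lt_succ_of_le hw')]

end acyc
end NCB


namespace NCB
section abs
variable {A : Type} [Ring A] [Algebra ℚ A]

/-- A finite multiplicative filtration. -/
structure Filt (A : Type) [Ring A] [Algebra ℚ A] (N : ℕ) where
  F : ℕ → Submodule ℚ A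
  top : ∀ a, a ∈ F 0
  mul : ∀ {i j a b}, a ∈ F i → b ∈ F j → a * b ∈ F (i + j)
  anti : ∀ {i j}, i ≤ j → F j ≤ F i
  bot : ∀ a, a ∈ F N → a = 0

variable {N : ℕ} (Φ : Filt A N)

theorem Filt.mul_left {i : ℕ} (a : A) {b : A} (hb : b ∈ Φ.F i) : a * b ∈ Φ.F i := by
  have := Φ.mul (Φ.top a) hb
  rwa [zero_add] at this

theorem Filt.mul_right {i : ℕ} {a : A} (b : A) (ha : a ∈ Φ.F i) : a * b ∈ Φ.F i := by
  have := Φ.mul ha (Φ.top b)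
  rwa [add_zero] at this

theorem Filt.pow_mem {a : A} (ha : a ∈ Φ.F 1) (n : ℕ) : a ^ n ∈ Φ.F n := by
  induction n with
  | zero => exact Φ.top _
  | succ n ih => rw [pow_succ]; exact Φ.mul ih ha

theorem Filt.pow_eq {a : A} (ha : a ∈ Φ.F 1) : a ^ N = 0 := Φ.bot _ (Φ.pow_mem ha N)

theorem Filt.nilp {a : A} (ha : a ∈ Φ.F 1) : IsNilpotent a := ⟨N, Φ.pow_eq ha⟩

theorem Filt.pow_approx {i : ℕ} (hi : 1 ≤ i) {d θ : A} (hd : d ∈ Φ.F 1) (hθ : θ ∈ Φ.F i) (n : ℕ) :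
    (d + θ) ^ (n + 2) - d ^ (n + 2) ∈ Φ.F (i + 1) := by
  have h1 : d + θ ∈ Φ.F 1 := Submodule.add_mem _ hd (Φ.anti hi hθ)
  have key : ∀ n, (d + θ) ^ (n + 1) - d ^ (n + 1) ∈ Φ.F i →
      (d + θ) ^ (n + 2) - d ^ (n + 2) ∈ Φ.F (i + 1) := by
    intro n hn
    have e : (d + θ) ^ (n + 2) - d ^ (n + 2) =
        (d + θ) * ((d + θ) ^ (n + 1) - d ^ (n + 1)) + θ * (d * d ^ n) := by
      rw [pow_succ' (d + θ) (n + 1), pow_succ' d (n + 1), pow_succ' d n]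
      noncomm_ring
    rw [e]
    refine Submodule.add_mem _ ?_ (Φ.mul hθ (Φ.mul_right _ hd))
    have := Φ.mul h1 hn
    rwa [add_comm] at this
  induction n with
  | zero =>
    apply key 0
    simpa using hθ
  | succ n ih => exact key _ (Φ.anti (Nat.le_succ i) ih)

theorem Filt.exp_approx {i : ℕ} (hi : 1 ≤ i) {d θ : A} (hd : d ∈ Φ.F 1) (hθ : θ ∈ Φ.F i) :
    IsNilpotent.exp (d + θ) - (IsNilpotent.exp d + θ) ∈ Φ.F (i + 1) := by
  have h1 : d + θ ∈ Φ.F 1 := Submodule.add_mem _ hd (Φ.anti hi hθ)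
  have e1 : (d + θ) ^ (N + 2) = 0 := pow_eq_zero_of_le (by omega) (Φ.pow_eq h1)
  have e2 : d ^ (N + 2) = 0 := pow_eq_zero_of_le (by omega) (Φ.pow_eq hd)
  rw [IsNilpotent.exp_eq_sum e1, IsNilpotent.exp_eq_sum e2, Finset.sum_range_succ',
    Finset.sum_range_succ', Finset.sum_range_succ' _ (N + 1), Finset.sum_range_succ' _ N]
  have : ∑ k ∈ Finset.range N, ((k + 1 + 1).factorial : ℚ)⁻¹ • ((d + θ) ^ (k + 2) - d ^ (k + 2))
      ∈ Φ.F (i + 1) :=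
    Submodule.sum_mem _ fun k _ => Submodule.smul_mem _ _ (Φ.pow_approx hi hd hθ k)
  convert this using 1
  simp only [smul_sub, Finset.sum_sub_distrib]
  simp
  abel

theorem Filt.exp_sub_one {d : A} (hd : d ∈ Φ.F 1) : IsNilpotent.exp d - 1 ∈ Φ.F 1 := by
  have := Φ.exp_approx le_rfl (Submodule.zero_mem _) hd
  rw [zero_add, IsNilpotent.exp_zero] at this
  have h := Submodule.add_mem _ (Φ.anti (by omega) this) hd
  convert h using 1
  abel

theorem Filt.step_alg {i : ℕ} (hi : 1 ≤ i) {d θ ε η f : A} (hd : d ∈ Φ.F 1) (hθ : θ ∈ Φ.F i)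
    (hε : ε ∈ Φ.F i) (hη : η ∈ Φ.F i) (hf : f = (1 + ε) * IsNilpotent.exp d)
    (h : ε - η - θ ∈ Φ.F (i + 1)) :
    IsNilpotent.exp (-η) * f - IsNilpotent.exp (d + θ) ∈ Φ.F (i + 1) := by
  have h1 := Φ.exp_approx hi hd hθ
  have h2 := Φ.exp_approx hi (Submodule.zero_mem _) (Submodule.neg_mem _ hη)
  rw [zero_add, IsNilpotent.exp_zero] at h2
  have h3 := Φ.exp_sub_one hd
  set E := IsNilpotent.exp d
  set X := IsNilpotent.exp (-η)
  set Y := IsNilpotent.exp (d + θ)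
  have e : X * f - Y = (X - (1 + -η)) * f - (Y - (E + θ)) + (ε - η) * (E - 1) - η * ε * E
      + (ε - η - θ) := by
    rw [hf]; noncomm_ring
  rw [e]
  refine Submodule.add_mem _ (Submodule.sub_mem _ (Submodule.add_mem _ (Submodule.sub_mem _
    (Φ.mul_right _ h2) h1) ?_) ?_) h
  · exact Φ.mul (Submodule.sub_mem _ hε hη) h3
  · exact Φ.mul_right _ (Φ.anti (by omega) (Φ.mul hη hε))

theorem Filt.step_comm {i : ℕ} {B Di D' ε ε' : A} (h1 : Di - B ∈ Φ.F 1)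
    (h2 : D' - B ∈ Φ.F 1) (hε : ε ∈ Φ.F i) (hε' : ε - ε' ∈ Φ.F (i + 1))
    (h : (1 + ε) * Di = D' * (1 + ε)) : (D' - Di) + (B * ε' - ε' * B) ∈ Φ.F (i + 1) := by
  have e0 : D' - Di = ε * Di - D' * ε := by
    rw [add_mul, mul_add, one_mul, mul_one] at h
    rw [sub_eq_sub_iff_add_eq_add, ← h]; abel
  have e : (D' - Di) + (B * ε' - ε' * B) =
      ε * (Di - B) - (D' - B) * ε + (ε - ε') * B - B * (ε - ε') := by
    rw [e0]; noncomm_ring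
  rw [e]
  refine Submodule.sub_mem _ (Submodule.add_mem _ (Submodule.sub_mem _ (Φ.mul hε h1) ?_)
    (Φ.mul_right _ hε')) (Φ.mul_left _ hε')
  have := Φ.mul h2 hε
  rwa [add_comm] at this

theorem exp_conj {a : A} (ha : IsNilpotent a) (X : A) {n : ℕ}
    (h : (fun y => a * y - y * a)^[n] X = 0) :
    IsNilpotent.exp a * X * IsNilpotent.exp (-a) =
      ∑ i ∈ Finset.range n, (i.factorial : ℚ)⁻¹ • (fun y => a * y - y * a)^[i] X := by
  set L := LinearMap.mulLeft ℚ a with hL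
  set R := LinearMap.mulRight ℚ (-a) with hR
  have hit : ∀ i, (fun y => a * y - y * a)^[i] X = ((L + R) ^ i) X := by
    intro i
    rw [Module.End.pow_apply]
    congr 2
    funext y
    simp [hL, hR, sub_eq_add_neg]
  obtain ⟨k, hk⟩ := ha
  have hk' : (-a) ^ k = 0 := by rw [neg_pow, hk, mul_zero]
  have hLn : L ^ k = 0 := by rw [hL, LinearMap.pow_mulLeft, hk, LinearMap.mulLeft_zero_eq_zero]
  have hRn : R ^ k = 0 := by rw [hR, LinearMap.pow_mulRight, hk', LinearMap.mulRight_zero_eq_zero]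
  have hc : Commute L R := LinearMap.commute_mulLeft_right _ _
  have eL : IsNilpotent.exp L = LinearMap.mulLeft ℚ (IsNilpotent.exp a) := by
    rw [IsNilpotent.exp_eq_sum hLn, IsNilpotent.exp_eq_sum hk]
    ext y
    simp [hL, LinearMap.pow_mulLeft, Finset.sum_mul]
  have eR : IsNilpotent.exp R = LinearMap.mulRight ℚ (IsNilpotent.exp (-a)) := by
    rw [IsNilpotent.exp_eq_sum hRn, IsNilpotent.exp_eq_sum hk']
    ext y
    simp [hR, LinearMap.pow_mulRight, Finset.mul_sum]
  have hs := IsNilpotent.exp_add_of_commute hc ⟨k, hLn⟩ ⟨k, hRn⟩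
  have hn : IsNilpotent (L + R) := hc.isNilpotent_add ⟨k, hLn⟩ ⟨k, hRn⟩
  have := IsNilpotent.exp_smul_eq_sum (M := A) (a := L + R) (m := X) (k := n)
    (by rw [Module.End.smul_def, ← hit, h]) hn
  rw [hs, eL, eR] at this
  simp only [Module.End.smul_def, ← hit] at this
  rw [← this]
  simp [mul_assoc]

end abs
end NCB


namespace NCB
section conc
variable {S : Type} [CommRing S] {κ : Type} (dg : κ → ℤ)

/-- Matrix coefficients in an ideal. -/
def cf {ι ι' : Type} (J : Ideal S) (F : (ι →₀ S) →ₗ[S] (ι' →₀ S)) : Prop :=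
  ∀ i j, F (single i 1) j ∈ J

theorem cf_apply {ι ι' : Type} {J : Ideal S} {F : (ι →₀ S) →ₗ[S] (ι' →₀ S)} (h : cf J F)
    {I : Ideal S} (v : ι →₀ S) (hv : ∀ i, v i ∈ I) (j) : F v j ∈ J * I := by
  have : F v = v.sum fun i c => c • F (single i 1) := by
    conv_lhs => rw [← Finsupp.sum_single v]
    rw [map_finsuppSum]
    refine Finsupp.sum_congr fun i _ => ?_
    rw [← map_smul, smul_single_one]
  rw [this, Finsupp.sum_apply]
  refine Submodule.sum_mem _ fun i _ => ?_
  rw [mul_comm]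
  exact Ideal.mul_mem_mul (hv i) (h i j)

theorem cf_comp {ι ι' ι'' : Type} {J I : Ideal S} {F : (ι →₀ S) →ₗ[S] (ι' →₀ S)}
    {G : (ι' →₀ S) →ₗ[S] (ι'' →₀ S)} (hF : cf J F) (hG : cf I G) : cf (I * J) (G ∘ₗ F) :=
  fun i j => cf_apply hG _ (hF i) j

theorem cf_tensL {J : Ideal S} {F : Module.End S (BW κ S)} (h : CoeffIn S J F) :
    cf J (tensL S F) := by
  rintro ⟨p, q⟩ ⟨p', q'⟩
  rw [tensL_single, lmapL_apply]
  split_ifs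
  · exact h _ _
  · exact J.zero_mem

theorem cf_tensR {J : Ideal S} (d : ℤ) {F : Module.End S (BW κ S)} (h : CoeffIn S J F) :
    cf J (tensR S dg d F) := by
  rintro ⟨p, q⟩ ⟨p', q'⟩
  rw [tensR_single, Finsupp.smul_apply, lmapR_apply]
  split_ifs
  · exact J.mul_mem_left _ (h _ _)
  · simp

/-- Endomorphisms with coefficients in `J`. -/
def cI (κ : Type) (J : Ideal S) : Submodule S (Module.End S (BW κ S)) where
  carrier := {F | CoeffIn S J F}
  add_mem' := fun ha hb i j => J.add_mem (ha i j) (hb i j)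
  zero_mem' := fun _ _ => J.zero_mem
  smul_mem' := fun r _ ha i j => J.mul_mem_left r (ha i j)

theorem mem_cI {J : Ideal S} {F : Module.End S (BW κ S)} : F ∈ cI κ J ↔ CoeffIn S J F := Iff.rfl

theorem cI_mul {I J : Ideal S} {F G : Module.End S (BW κ S)} (hF : F ∈ cI κ I) (hG : G ∈ cI κ J) :
    F * G ∈ cI κ (I * J) := cf_comp (F := G) (G := F) hG hF

/-- The `m`-adic filtration of the endomorphisms. -/
noncomputable def filtE [Algebra ℚ S] (κ : Type) (m : Ideal S) (N : ℕ) (hN : m ^ N = ⊥) :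
    Filt (Module.End S (BW κ S)) N where
  F i := (cI κ (m ^ i)).restrictScalars ℚ
  top := fun a i j => by simp
  mul := by
    intro i j a b ha hb
    rw [Submodule.restrictScalars_mem] at *
    rw [pow_add]
    exact cI_mul ha hb
  anti := by
    intro i j h a ha u v
    exact Ideal.pow_le_pow_right h (ha u v)
  bot := by
    intro a ha
    rw [Submodule.restrictScalars_mem, hN] at ha
    exact end_eq_zero_of_coeffIn ha

theorem mem_filtE [Algebra ℚ S] {m : Ideal S} {N : ℕ} {hN : m ^ N = ⊥} {i : ℕ}
    {F : Module.End S (BW κ S)} : F ∈ (filtE κ m N hN).F i ↔ CoeffIn S (m ^ i) F := Iff.rfl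

/-! ### coalgebra morphisms -/

theorem counit_apply (v : BW κ S) : counit S v = v [] := by
  have : counit S = (Finsupp.lapply [] : BW κ S →ₗ[S] S) := by
    apply end_ext
    intro w
    by_cases h : w = []
    · simp [counit, h]
      exact fun h => h.symm
    · simp [counit, h]
  rw [this]; rfl

theorem coder_nil {d : ℤ} {F : Module.End S (BW κ S)} (hF : IsCoder S dg d F) (w) :
    F (single w 1) [] = 0 := by
  have := (isCoder_iff dg d F).1 hF w [] []
  rw [T_right, T_left] at this
  · simpa [epsO_nil, sgn_zero] using this
  · intro p q _ hp; simp [hp]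
  · intro p q _ hq; simp [hq]

/-- `F ↦ F ⊗ 1` as a ring homomorphism. -/
noncomputable def tensLHom : Module.End S (BW κ S) →+* Module.End S (BW2 κ S) where
  toFun := tensL S
  map_one' := tensL_one
  map_mul' := tensL_mul
  map_zero' := by
    have := tensL_smul (S := S) (κ := κ) 0 0
    rw [zero_smul, zero_smul] at this
    exact this
  map_add' := tensL_add

/-- `F ↦ 1 ⊗ F` as a ring homomorphism. -/
noncomputable def tensRHom : Module.End S (BW κ S) →+* Module.End S (BW2 κ S) where
  toFun := tensR S dg 0
  map_one' := tensR_one dg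
  map_mul' := fun F G => by
    have := tensR_mul dg 0 0 F G
    rwa [add_zero] at this
  map_zero' := by
    have := tensR_smul (S := S) dg 0 0 0
    rw [zero_smul, zero_smul] at this
    exact this
  map_add' := tensR_add dg 0

theorem tensLR_comm {F : Module.End S (BW κ S)} (hF : HomogEnd S dg 0 F)
    (G : Module.End S (BW κ S)) : Commute (tensL S F) (tensR S dg 0 G) := by
  have := tens_comm dg 0 0 F G hF
  rw [zero_mul, sgn_zero, one_smul] at this
  exact this.symm

theorem IsCoalgMor.mul' {F G : Module.End S (BW κ S)} (hF : IsCoalgMor S F)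
    (hG : IsCoalgMor S G) (hG' : HomogEnd S dg 0 G) : IsCoalgMor S (F * G) := by
  constructor
  · have e : tens2 S (F * G) (F * G) = tens2 S F F * tens2 S G G := by
      rw [tens2_eq dg, tens2_eq dg, tens2_eq dg, tensL_mul]
      have h := tensR_mul dg 0 0 F G
      rw [add_zero] at h
      have hc := (tensLR_comm dg hG' F).eq
      rw [h, mul_assoc, mul_assoc, ← mul_assoc (tensL S G), hc, mul_assoc]
    rw [e]
    have h1 : comul S ∘ₗ (F * G) = (comul S ∘ₗ F) ∘ₗ G := rfl
    rw [h1, hF.1, LinearMap.comp_assoc, hG.1]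
    rfl
  · have h1 : counit S ∘ₗ (F * G) = (counit S ∘ₗ F) ∘ₗ G := rfl
    rw [h1, hF.2, hG.2]

theorem homogEnd_exp [Algebra ℚ S] {d : Module.End S (BW κ S)} (hd : HomogEnd S dg 0 d)
    (hn : IsNilpotent d) : HomogEnd S dg 0 (IsNilpotent.exp d) := by
  obtain ⟨n, hn⟩ := hn
  rw [IsNilpotent.exp_eq_sum hn]
  have hp : ∀ i, HomogEnd S dg 0 (d ^ i) := by
    intro i
    induction i with
    | zero => exact homogEnd_one dg
    | succ i ih =>
      rw [pow_succ]
      have := HomogEnd.mul' dg ih hd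
      rwa [add_zero] at this
  refine Finset.sum_induction _ (HomogEnd S dg 0) (fun _ _ h h' => HomogEnd.add' dg h h')
    (homogEnd_zero dg 0) fun i _ => ?_
  rw [← algebraMap_smul S]
  exact HomogEnd.smul' dg _ (hp i)

theorem coalgMor_exp [Algebra ℚ S] {d : Module.End S (BW κ S)} (hc : IsCoder S dg 0 d)
    (hd : HomogEnd S dg 0 d) (hn : IsNilpotent d) : IsCoalgMor S (IsNilpotent.exp d) := by
  have hL : IsNilpotent (tensL S d) := hn.map (tensLHom (S := S) (κ := κ))
  have hR : IsNilpotent (tensR S dg 0 d) := hn.map (tensRHom (S := S) (κ := κ) dg)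
  have hcm := tensLR_comm dg hd d
  constructor
  · have h1 := Module.End.commute_exp_left_of_commute hn (hcm.isNilpotent_add hL hR)
      (g := comul S) (by rw [hc]; rfl)
    rw [← h1, IsNilpotent.exp_add_of_commute hcm hL hR, tens2_eq dg]
    have e1 := IsNilpotent.map_exp hn (tensLHom (S := S) (κ := κ))
    have e2 := IsNilpotent.map_exp hn (tensRHom (S := S) (κ := κ) dg)
    change tensL S _ = _ at e1
    change tensR S dg 0 _ = _ at e2
    rw [e1, e2]
    rfl
  · have h1 := Module.End.commute_exp_left_of_commute hn
      (IsNilpotent.zero : IsNilpotent (0 : Module.End S S)) (g := counit S) (by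
        rw [LinearMap.zero_comp]
        apply end_ext
        intro w
        rw [LinearMap.comp_apply, counit_apply, coder_nil dg hc]; rfl)
    rw [← h1, IsNilpotent.exp_zero]
    rfl

end conc
end NCB


namespace NCB
section main
variable {S : Type} [CommRing S] {κ : Type} (dg : κ → ℤ)

/-- Unital curved structures. -/
structure AStr (D : Module.End S (BW κ S)) : Prop where
  c : IsCoder S dg 1 D
  h : HomogEnd S dg 1 D
  sq : D * D = 0
  u : UnitC dg (pc D)

/-- Normalized coderivations of degree `1`. -/
structure Nrm1 (D : Module.End S (BW κ S)) : Prop where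
  c : IsCoder S dg 1 D
  h : HomogEnd S dg 1 D
  n : ∀ w, none ∈ w → pc D w = 0

/-- Normalized coderivations of degree `0`. -/
structure Nrm0 (D : Module.End S (BW κ S)) : Prop where
  c : IsCoder S dg 0 D
  h : HomogEnd S dg 0 D
  n : ∀ w, none ∈ w → pc D w = 0

theorem unitC_add {β γ : List (Option κ) → Avs κ S} (h : UnitC dg β)
    (hn : ∀ w, none ∈ w → γ w = 0) : UnitC dg (β + γ) where
  h1 := by rw [Pi.add_apply, h.h1, hn _ (by simp), add_zero]
  h2 x := by rw [Pi.add_apply, h.h2, hn _ (by simp), add_zero]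
  h3 x := by rw [Pi.add_apply, h.h3, hn _ (by simp), add_zero]
  h4 w hw hw' := by rw [Pi.add_apply, h.h4 w hw hw', hn _ hw', add_zero]

theorem unitC_sub {β γ : List (Option κ) → Avs κ S} (h : UnitC dg β) (h0 : UnitC dg γ) (w)
    (hw : none ∈ w) : β w = γ w := by
  match w with
  | [] => simp at hw
  | [x] =>
    have : none = x := by simpa using hw
    subst this
    rw [h.h1, h0.h1]
  | [x, y] =>
    rcases (by simpa using hw : none = x ∨ none = y) with rfl | rfl
    · rw [h.h3, h0.h3]
    · rw [h.h2, h0.h2]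
  | a :: b :: c :: l => rw [h.h4 _ (by simp) hw, h0.h4 _ (by simp) hw]

theorem pc_add' (F G : Module.End S (BW κ S)) : pc (F + G) = pc F + pc G := funext (pc_add F G)

theorem ad_c {d D : Module.End S (BW κ S)} (hd : Nrm0 dg d) (hD : IsCoder S dg 1 D)
    (hD' : HomogEnd S dg 1 D) : IsCoder S dg 1 (d * D - D * d) ∧
      HomogEnd S dg 1 (d * D - D * d) := by
  constructor
  · have := IsCoder.bracket dg hd.c hD hd.h hD'
    rwa [zero_mul, sgn_zero, one_smul, zero_add] at this
  · have h1 := HomogEnd.mul' dg hd.h hD'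
    have h2 := HomogEnd.mul' dg hD' hd.h
    rw [zero_add] at h1
    rw [add_zero] at h2
    exact HomogEnd.sub' dg h1 h2

theorem ad_unital {d D : Module.End S (BW κ S)} (hd : Nrm0 dg d) (hD : IsCoder S dg 1 D)
    (hD' : HomogEnd S dg 1 D) (hu : UnitC dg (pc D)) : Nrm1 dg (d * D - D * d) where
  c := (ad_c dg hd hD hD').1
  h := (ad_c dg hd hD hD').2
  n w hw := by
    rw [pc_sub, pc_mul dg _ hD, pc_mul dg _ hd.c, ← neg_sub, K1 dg (φ := pc d) hu (HomogEnd.homogC dg hd.h) hd.n w hw,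
      neg_zero]

theorem ad_nrm {d D x : Module.End S (BW κ S)} (hd : Nrm0 dg d) (hD : IsCoder S dg 1 D)
    (hD' : HomogEnd S dg 1 D) (hu : UnitC dg (pc D)) (hx : Nrm1 dg x) :
    Nrm1 dg (d * x - x * d) where
  c := (ad_c dg hd hx.c hx.h).1
  h := (ad_c dg hd hx.c hx.h).2
  n w hw := by
    have h1 := (ad_unital dg hd hD hD' hu).n w hw
    have h2 := (ad_unital dg hd (hD.add' dg hx.c) (hD'.add' dg hx.h)
      (by rw [pc_add']; exact unitC_add dg hu hx.n)).n w hw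
    have e : d * (D + x) - (D + x) * d = (d * D - D * d) + (d * x - x * d) := by
      rw [mul_add, add_mul]; exact add_sub_add_comm (d * D) (d * x) (D * d) (x * d)
    rw [e, pc_add, h1, zero_add] at h2
    exact h2

theorem ad_iter {d D : Module.End S (BW κ S)} (hd : Nrm0 dg d) (hD : IsCoder S dg 1 D)
    (hD' : HomogEnd S dg 1 D) (hu : UnitC dg (pc D)) (i : ℕ) :
    Nrm1 dg ((fun y => d * y - y * d)^[i + 1] D) := by
  induction i with
  | zero => exact ad_unital dg hd hD hD' hu
  | succ i ih =>
    rw [Function.iterate_succ_apply']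
    exact ad_nrm dg hd hD hD' hu ih

theorem ad_mem {m : Ideal S} {d D : Module.End S (BW κ S)} (hd : CoeffIn S m d) (i : ℕ) :
    CoeffIn S (m ^ i) ((fun y => d * y - y * d)^[i] D) := by
  induction i with
  | zero => intro u v; simp
  | succ i ih =>
    rw [Function.iterate_succ_apply']
    have h1 := cI_mul (mem_cI.2 hd) (mem_cI.2 ih)
    have h2 := cI_mul (mem_cI.2 ih) (mem_cI.2 hd)
    rw [← pow_succ'] at h1
    rw [← pow_succ] at h2
    intro u v
    exact (m ^ (i + 1)).sub_mem (h1 u v) (h2 u v)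

theorem conj_eq [Algebra ℚ S] {m : Ideal S} {N : ℕ} (hN : m ^ N = ⊥)
    {d : Module.End S (BW κ S)} (hd : CoeffIn S m d) (D : Module.End S (BW κ S)) :
    IsNilpotent.exp d * D * IsNilpotent.exp (-d) =
      D + ∑ i ∈ Finset.range N, ((i + 1).factorial : ℚ)⁻¹ • (fun y => d * y - y * d)^[i + 1] D := by
  have hd' : d ∈ (filtE κ m N hN).F 1 := by rw [mem_filtE, pow_one]; exact hd
  rw [exp_conj ((filtE κ m N hN).nilp hd') D (n := N + 1), Finset.sum_range_succ', add_comm]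
  · simp
  · apply end_eq_zero_of_coeffIn
    have := ad_mem (D := D) hd (N + 1)
    rwa [pow_succ, hN, Ideal.bot_mul] at this

theorem conj_unital [Algebra ℚ S] {m : Ideal S} {N : ℕ} (hN : m ^ N = ⊥)
    {d : Module.End S (BW κ S)} (hd : CoeffIn S m d) (hd0 : Nrm0 dg d) {D : Module.End S (BW κ S)}
    (hD : AStr dg D) :
    UnitC dg (pc (IsNilpotent.exp d * D * IsNilpotent.exp (-d))) ∧
    CoeffIn S m (IsNilpotent.exp d * D * IsNilpotent.exp (-d) - D) := by
  rw [conj_eq hN hd]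
  constructor
  · rw [pc_add']
    apply unitC_add dg hD.u
    intro w hw
    have : (∑ i ∈ Finset.range N, ((i + 1).factorial : ℚ)⁻¹ • (fun y => d * y - y * d)^[i + 1] D) ∈
      LinearMap.ker (R := S) (M := Module.End S (BW κ S)) ((proj1 S) ∘ₗ LinearMap.applyₗ (single w 1)) := by
      refine Submodule.sum_mem _ fun i _ => ?_
      rw [← algebraMap_smul S]
      exact Submodule.smul_mem _ _ ((ad_iter dg hd0 hD.c hD.h hD.u i).n w hw)
    exact this
  · have : (∑ i ∈ Finset.range N, ((i + 1).factorial : ℚ)⁻¹ • (fun y => d * y - y * d)^[i + 1] D) ∈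
      cI κ m := by
      refine Submodule.sum_mem _ fun i _ => ?_
      rw [← algebraMap_smul S]
      refine Submodule.smul_mem _ _ ?_
      intro u v
      exact Ideal.pow_le_self (Nat.succ_ne_zero i) (ad_mem hd (i + 1) u v)
    have e : ∀ X : Module.End S (BW κ S), D + X - D = X := fun X =>
      add_sub_cancel_left (G := Module.End S (BW κ S)) D X
    rw [e]
    exact this

theorem almost_coder {g : Module.End S (BW κ S)} (hg : IsCoalgMor S g) (I J : Ideal S)
    (hIJ : I * I ≤ J) (hε : CoeffIn S I (g - 1)) :
    CoeffIn S J ((g - 1) - coder dg 0 (pc (g - 1))) := by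
  set ε := g - 1 with hε'
  have hg1 : g = 1 + ε := by rw [hε']; exact (add_sub_cancel (G := Module.End S (BW κ S)) 1 g).symm
  apply coder_unique dg J 0
  · intro w p q
    have h1 := LinearMap.congr_fun hg.1 (single w 1)
    have h2 := LinearMap.congr_fun (coder_isCoder dg 0 (pc ε)) (single w 1)
    rw [tens2_eq dg, hg1, tensL_add, tensR_add, tensL_one, tensR_one] at h1
    simp only [LinearMap.comp_apply, LinearMap.add_apply, Module.End.mul_apply,
      Module.End.one_apply, map_add] at h1 h2
    rw [tensL_sub, tensR_sub]
    simp only [LinearMap.sub_apply, map_sub]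
    have e : comul S (ε (single w 1)) - comul S (coder dg 0 (pc ε) (single w 1)) -
        (tensL S ε (comul S (single w 1)) - tensL S (coder dg 0 (pc ε)) (comul S (single w 1))) -
        (tensR S dg 0 ε (comul S (single w 1)) - tensR S dg 0 (coder dg 0 (pc ε)) (comul S (single w 1)))
        = tensL S ε (tensR S dg 0 ε (comul S (single w 1))) := by
      rw [h2]
      have := eq_sub_of_add_eq' h1
      rw [this]; abel
    rw [e]
    have c0 : cf (⊤ : Ideal S) (comul S (κ := κ)) := fun _ _ => Submodule.mem_top
    have := cf_comp c0 (cf_comp (cf_tensR dg 0 hε) (cf_tensL hε)) w (p, q)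
    rw [Ideal.mul_top] at this
    exact hIJ this
  · intro w c
    have : proj1 S ((ε - coder dg 0 (pc ε)) (single w 1)) = 0 := by
      change pc _ w = 0
      rw [pc_sub, pc_coder, sub_self]
    rw [this]; exact J.zero_mem

theorem coder_cf {J : Ideal S} {d : ℤ} {φ : List (Option κ) → Avs κ S} (h : ∀ w, φ w ∈ vJ J) :
    CoeffIn S J (coder dg d φ) :=
  coder_congr_mod dg J d (coder_isCoder dg d φ) fun w c => by
    rw [proj1_coder]; exact h w c

end main
end NCB


namespace NCB
section abs2
variable {A : Type} [Ring A]

theorem abs_e1 {f E E' : A} (h : E * E' = 1) : f * E' - 1 = (f - E) * E' := by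
  rw [sub_mul, h]

theorem abs_e2 (D B P : A) : (D * P + P * D) - (B * P + P * B) = (D - B) * P + P * (D - B) := by
  noncomm_ring

theorem abs_e3 {N : ℕ} [Algebra ℚ A] (Φ : Filt A N) {j : ℕ} {a b c c' t : A} (h1 : a - b ∈ Φ.F j)
    (h2 : b - c' - t ∈ Φ.F j) (h3 : c - c' ∈ Φ.F j) : a - c - t ∈ Φ.F j := by
  have := Submodule.sub_mem _ (Submodule.add_mem _ h1 h2) h3
  convert this using 1
  abel

theorem abs_e4 {D P : A} (h : D * D = 0) : D * (D * P + P * D) = (D * P + P * D) * D := by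
  rw [mul_add, add_mul, ← mul_assoc, h, mul_assoc P, h, zero_mul, mul_zero,
        zero_add, add_zero, mul_assoc]

theorem abs_e5 {D P : A} (h : D * P = P * D) : (-P) * D = D * (-P) := by
  rw [mul_neg, neg_mul, h]

end abs2

section main2
variable {S : Type} [CommRing S] {κ : Type} (dg : κ → ℤ)

/-- State of the induction. -/
def Stage [Algebra ℚ S] (m : Ideal S) (D D' : Module.End S (BW κ S)) (i : ℕ) : Prop :=
  ∃ d f : Module.End S (BW κ S), Nrm0 dg d ∧ CoeffIn S m d ∧ IsCoalgMor S f ∧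
    HomogEnd S dg 0 f ∧ f * D = D' * f ∧ CoeffIn S (m ^ i) (f - IsNilpotent.exp d)

theorem Nrm0.add' {d d' : Module.End S (BW κ S)} (h : Nrm0 dg d) (h' : Nrm0 dg d') :
    Nrm0 dg (d + d') where
  c := h.c.add' dg h'.c
  h := h.h.add' dg h'.h
  n w hw := by rw [pc_add, h.n w hw, h'.n w hw, add_zero]

theorem neg_eq_smul' (d : Module.End S (BW κ S)) : -d = (-1 : S) • d := by
  refine LinearMap.ext fun v => ?_
  simp

theorem nil_neg {d : Module.End S (BW κ S)} (h : IsNilpotent d) : IsNilpotent (-d) :=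
  IsNilpotent.neg (R := Module.End S (BW κ S)) h

set_option maxHeartbeats 2000000 in
theorem stage_step [Algebra ℚ S] {m : Ideal S} {N : ℕ} (hN : m ^ N = ⊥)
    {B D D' : Module.End S (BW κ S)} (hB : AStr dg B) (hB0 : pc B [] = 0) (hD : AStr dg D)
    (hD' : AStr dg D') (hDB : CoeffIn S m (D - B)) (hDB' : CoeffIn S m (D' - B)) {i : ℕ}
    (hi : 1 ≤ i) (h : Stage dg m D D' i) : Stage dg m D D' (i + 1) := by
  obtain ⟨d, f, hd0, hdm, hf, hfh, hfD, hfd⟩ := h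
  set Φ := filtE κ m N hN with hΦ
  have hd1 : d ∈ Φ.F 1 := by rw [mem_filtE, pow_one]; exact hdm
  have hnil : IsNilpotent d := Φ.nilp hd1
  have hneg_h : HomogEnd S dg 0 (-d) := by rw [neg_eq_smul']; exact hd0.h.smul' dg _
  have hneg_c : IsCoder S dg 0 (-d) := by rw [neg_eq_smul']; exact hd0.c.smul' dg _
  set E := IsNilpotent.exp d with hE
  set E' := IsNilpotent.exp (-d) with hE'
  have hEE' : E * E' = 1 := IsNilpotent.exp_mul_exp_neg_self hnil
  have hE'E : E' * E = 1 := IsNilpotent.exp_neg_mul_exp_self hnil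
  set g := f * E' with hg
  have hE'h : HomogEnd S dg 0 E' := homogEnd_exp dg hneg_h (nil_neg hnil)
  have hgc : IsCoalgMor S g := hf.mul' dg (coalgMor_exp dg hneg_c hneg_h (nil_neg hnil)) hE'h
  have hgh : HomogEnd S dg 0 g := by
    have := hfh.mul' dg hE'h
    rwa [add_zero] at this
  set ε := g - 1 with hε
  have hg1 : 1 + ε = g := add_sub_cancel (G := Module.End S (BW κ S)) 1 g
  have hεi : ε ∈ Φ.F i := by
    have : ε = (f - E) * E' := abs_e1 (A := Module.End S (BW κ S)) hEE'
    rw [this]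
    exact Φ.mul_right _ hfd
  have hεh : HomogEnd S dg 0 ε := hgh.sub' dg (homogEnd_one dg)
  set Di := E * D * E' with hDi
  obtain ⟨hDiu, hDiD⟩ := conj_unital dg hN hdm hd0 hD
  have hgD : (1 + ε) * Di = D' * (1 + ε) := by
    rw [hg1, hg, hDi, ← mul_assoc, ← mul_assoc, mul_assoc f E' E, hE'E, mul_one, hfD, mul_assoc]
  set φ := pc ε with hφ
  have hφh : HomogC dg 0 φ := HomogEnd.homogC dg hεh
  have hφi : ∀ w, φ w ∈ vJ (m ^ i) := by
    intro w c
    rw [hφ, pc, proj1_apply]; exact hεi w [c]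
  have hdbl : m ^ i * m ^ i ≤ m ^ (i + 1) := by
    rw [← pow_add]; exact Ideal.pow_le_pow_right (by omega)
  have hac : ε - coder dg 0 φ ∈ Φ.F (i + 1) := almost_coder dg hgc (m ^ i) _ hdbl hεi
  have hDiB : Di - B ∈ Φ.F 1 := by
    rw [mem_filtE, pow_one]
    intro u v
    have := m.add_mem (hDiD u v) (hDB u v)
    convert this using 1
    simp [hDi, hE, hE']
  have hD'B : D' - B ∈ Φ.F 1 := by rw [mem_filtE, pow_one]; exact hDB'
  have hcomm := Φ.step_comm hDiB hD'B hεi hac hgD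
  have hJ : ∀ w, none ∈ w → d0 dg (pc B) φ w ∈ vJ (m ^ (i + 1)) := by
    intro w hw c
    have h1 := hcomm w [c]
    have h2 : pc (D' - Di + (B * coder dg 0 φ - coder dg 0 φ * B)) w = d0 dg (pc B) φ w := by
      rw [pc_add, pc_sub, pc_sub, unitC_sub dg hD'.u hDiu w hw, sub_self, zero_add,
        pc_mul dg _ (coder_isCoder dg 0 φ), pc_mul dg _ hB.c, pc_coder]
      rfl
    rw [← h2, pc, proj1_apply]
    exact h1
  obtain ⟨ψ, hψh, hψi, hψ⟩ := acyclic dg hB.c hB.h hB.sq hB.u hB0 (m ^ i) (m ^ (i + 1)) hφh hφi hJ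
  obtain ⟨b1, b2, b3⟩ := coder_d1 dg hB.c hB.h hψh
  obtain ⟨c1, c2, c3⟩ := coder_d1 dg hD'.c hD'.h hψh
  set Ψ := coder dg (-1) ψ with hΨ
  have hΨi : Ψ ∈ Φ.F i := coder_cf dg hψi
  set η := D' * Ψ + Ψ * D' with hη
  set η' := B * Ψ + Ψ * B with hη'
  have hηi : η ∈ Φ.F i := Submodule.add_mem _ (Φ.mul_left _ hΨi) (Φ.mul_right _ hΨi)
  have hηη' : η - η' ∈ Φ.F (i + 1) := by
    have e : η - η' = (D' - B) * Ψ + Ψ * (D' - B) :=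
      abs_e2 (A := Module.End S (BW κ S)) D' B Ψ
    rw [e]
    refine Submodule.add_mem _ ?_ (Φ.mul hΨi hD'B)
    have := Φ.mul hD'B hΨi
    rwa [add_comm] at this
  set θ : List (Option κ) → Avs κ S := fun w => if none ∈ w then 0 else φ w - d1 dg (pc B) ψ w with hθ
  have hd1h : HomogC dg 0 (d1 dg (pc B) ψ) := by rw [← b3]; exact HomogEnd.homogC dg b2
  have hθh : HomogC dg 0 θ := by
    intro w c hc
    simp only [hθ] at hc
    split_ifs at hc with h0
    · simp at hc
    · by_cases h1 : φ w c = 0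
      · exact hd1h w c (by simpa [h1] using hc)
      · exact hφh w c h1
  have hθi : ∀ w, θ w ∈ vJ (m ^ i) := by
    intro w
    simp only [hθ]
    split_ifs
    · exact Submodule.zero_mem _
    · exact Submodule.sub_mem _ (hφi w) (d1_mem dg _ hψi w)
  set Θ := coder dg 0 θ with hΘ
  have hΘ0 : Nrm0 dg Θ := ⟨coder_isCoder dg 0 θ, hθh.homogEnd dg, fun w hw => by
    rw [hΘ, pc_coder]; simp only [hθ, hw, if_true]⟩
  have hΘi : Θ ∈ Φ.F i := coder_cf dg hθi
  have hrest : coder dg 0 φ - η' - Θ ∈ Φ.F (i + 1) := by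
    refine coder_congr_mod dg (m ^ (i + 1)) 0 (IsCoder.sub' dg (IsCoder.sub' dg
      (coder_isCoder dg 0 φ) b1) hΘ0.c) ?_
    intro w c
    have e : pc (coder dg 0 φ - η' - Θ) w = φ w - d1 dg (pc B) ψ w - θ w := by
      rw [pc_sub, pc_sub, pc_coder, b3, hΘ, pc_coder]
    change pc (coder dg 0 φ - η' - Θ) w c ∈ _
    rw [e]
    simp only [hθ]
    split_ifs with hw
    · rw [sub_zero]; exact hψ w hw c
    · rw [sub_self]; exact (m ^ (i + 1)).zero_mem
  have hfin : ε - η - Θ ∈ Φ.F (i + 1) := abs_e3 Φ hac hrest hηη'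
  have hη1 : η ∈ Φ.F 1 := Φ.anti hi hηi
  have hηn : IsNilpotent η := Φ.nilp hη1
  have hfe : f = (1 + ε) * E := by rw [hg1, hg, mul_assoc, hE'E, mul_one]
  have hηc' : IsCoder S dg 0 (-η) := by rw [neg_eq_smul']; exact c1.smul' dg _
  have hηh' : HomogEnd S dg 0 (-η) := by rw [neg_eq_smul']; exact c2.smul' dg _
  have hΘm : CoeffIn S m Θ := fun u v => Ideal.pow_le_self (by omega) (hΘi u v)
  refine ⟨d + Θ, IsNilpotent.exp (-η) * f, hd0.add' dg hΘ0, ?_, ?_, ?_, ?_, ?_⟩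
  · exact fun u v => m.add_mem (hdm u v) (hΘm u v)
  · exact (coalgMor_exp dg hηc' hηh' (nil_neg hηn)).mul' dg hf hfh
  · have := (homogEnd_exp dg hηh' (nil_neg hηn)).mul' dg hfh
    rwa [add_zero] at this
  · have hcη : D' * η = η * D' := abs_e4 (A := Module.End S (BW κ S)) hD'.sq
    have := Module.End.commute_exp_left_of_commute (g := D') (nil_neg hηn) (nil_neg hηn)
      (abs_e5 (A := Module.End S (BW κ S)) hcη)
    change IsNilpotent.exp (-η) * D' = D' * IsNilpotent.exp (-η) at this
    rw [mul_assoc, hfD, ← mul_assoc, this, mul_assoc]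
  · exact Φ.step_alg hi hd1 hΘi hεi hηi hfe hfin

theorem nrm0_zero : Nrm0 dg (0 : Module.End S (BW κ S)) where
  c := by
    have := (coder_isCoder dg 0 (fun _ => 0 : List (Option κ) → Avs κ S)).smul' dg 0
    rwa [zero_smul] at this
  h := homogEnd_zero dg 0
  n w _ := by simp [pc]

theorem exists_log [Algebra ℚ S] {m : Ideal S} {N : ℕ} (hN : m ^ N = ⊥)
    {B D D' : Module.End S (BW κ S)} (hB : AStr dg B) (hB0 : pc B [] = 0) (hD : AStr dg D)
    (hD' : AStr dg D') (hDB : CoeffIn S m (D - B)) (hDB' : CoeffIn S m (D' - B))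
    {f : Module.End S (BW κ S)} (hf : IsCoalgMor S f) (hfh : HomogEnd S dg 0 f)
    (hfD : f * D = D' * f) (hf1 : CoeffIn S m (f - 1)) :
    ∃ d, Nrm0 dg d ∧ CoeffIn S m d ∧ IsNilpotent.exp d * D = D' * IsNilpotent.exp d := by
  have key : ∀ i, Stage dg m D D' (i + 1) := by
    intro i
    induction i with
    | zero =>
      refine ⟨0, f, nrm0_zero dg, fun u v => m.zero_mem, hf, hfh, hfD, ?_⟩
      rw [IsNilpotent.exp_zero, zero_add, pow_one]
      exact hf1
    | succ i ih => exact stage_step dg hN hB hB0 hD hD' hDB hDB' (by omega) ih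
  obtain ⟨d, f, h1, h2, h3, h4, h5, h6⟩ := key N
  refine ⟨d, h1, h2, ?_⟩
  rw [pow_succ, hN, Ideal.bot_mul] at h6
  have h7 := end_eq_zero_of_coeffIn h6
  have h8 : f = IsNilpotent.exp d := eq_of_sub_eq_zero (α := Module.End S (BW κ S)) h7
  rw [← h8]; exact h5

end main2
end NCB


namespace NCB
section abs3
variable {A : Type} [Ring A]

theorem abs_g (d x B : A) : (d * x - x * d) - (B * d - d * B) = d * (B + x) - (B + x) * d := by
  noncomm_ring

theorem abs_mc {B : A} (hB : B * B = 0) (x : A) :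
    (B + x) * (B + x) = B * x + x * B + x * x := by
  have : (B + x) * (B + x) = B * B + (B * x + x * B + x * x) := by noncomm_ring
  rw [this, hB, zero_add]

theorem abs_cj {E E' X Y : A} (h : E * E' = 1) (h2 : E * X = Y * E) : E * X * E' = Y := by
  rw [h2, mul_assoc, h, mul_one]

theorem abs_cj' {E E' X Y : A} (h : E' * E = 1) (h2 : E * X * E' = Y) : E * X = Y * E := by
  rw [← h2, mul_assoc, h, mul_one]

end abs3

section base
variable {k : Type} [Field k] [CharZero k] {R : Type} [CommRing R] [Algebra k R] {κ : Type}
  (dg : κ → ℤ)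

theorem baseEnd_single (F : Module.End k (BW κ k)) (w : List (Option κ)) :
    baseEnd k R F (single w 1) = mapBW k R (F (single w 1)) := by
  simp [baseEnd]

theorem mapBW_apply (v : BW κ k) (w : List (Option κ)) :
    mapBW k R v w = algebraMap k R (v w) := by
  simp [mapBW]

theorem mapBW_single (w : List (Option κ)) (c : k) :
    mapBW k R (single w c : BW κ k) = single w (algebraMap k R c) := by
  simp [mapBW]

theorem baseEnd_mapBW (F : Module.End k (BW κ k)) (v : BW κ k) :
    baseEnd k R F (mapBW k R v) = mapBW k R (F v) := by
  induction v using Finsupp.induction_linear with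
  | zero => simp
  | add f g hf hg => simp only [map_add, hf, hg]
  | single w c =>
    have h1 : (single w c : BW κ k) = c • single w 1 := by simp
    have h2 : (single w (algebraMap k R c) : BW κ R) = algebraMap k R c • single w 1 := by
      rw [Finsupp.smul_single, smul_eq_mul, mul_one]
    rw [mapBW_single, h2, map_smul, baseEnd_single, h1, map_smul, map_smul, algebraMap_smul]

theorem baseEnd_sq {F : Module.End k (BW κ k)} (h : F * F = 0) :
    baseEnd k R F * baseEnd k R F = 0 := by
  apply end_ext
  intro w
  rw [Module.End.mul_apply, baseEnd_single, baseEnd_mapBW, ← Module.End.mul_apply, h]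
  simp

theorem baseEnd_coder {F : Module.End k (BW κ k)} {d : ℤ} (h : IsCoder k dg d F) :
    IsCoder R dg d (baseEnd k R F) := by
  rw [isCoder_iff] at h ⊢
  intro w p q
  simp only [baseEnd_single, mapBW_apply]
  rw [h w p q, map_add, map_T, map_T]
  congr 1
  · refine T_congr fun a b _ => ?_
    split_ifs <;> simp
  · refine T_congr fun a b _ => ?_
    split_ifs <;> simp [sgn_cast]

theorem baseEnd_homog {F : Module.End k (BW κ k)} {d : ℤ} (h : HomogEnd k dg d F) :
    HomogEnd R dg d (baseEnd k R F) := by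
  intro w u hu
  refine h w u ?_
  rw [Finsupp.mem_support_iff] at hu ⊢
  intro h0
  rw [baseEnd_single, mapBW_apply, h0, map_zero] at hu
  exact hu rfl

theorem pc_baseEnd (F : Module.End k (BW κ k)) (w : List (Option κ)) (c : Option κ) :
    pc (baseEnd k R F) w c = algebraMap k R (pc F w c) := by
  rw [pc, pc, proj1_apply, proj1_apply, baseEnd_single, mapBW_apply]

theorem baseEnd_unit {F : Module.End k (BW κ k)} (h : UnitAxioms k dg F) :
    UnitC dg (pc (baseEnd k R F)) := by
  obtain ⟨h1, h2, h3, h4⟩ := h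
  change pc F _ = _ at h1
  change ∀ x, pc F _ = _ at h2
  change ∀ x, pc F _ = _ at h3
  change ∀ ls, _ → _ → pc F _ = _ at h4
  constructor
  · ext c; rw [pc_baseEnd, h1]; simp
  · intro x; ext c; rw [pc_baseEnd, h2]
    simp [Finsupp.single_apply, sgn_cast, apply_ite (algebraMap k R)]
  · intro x; ext c; rw [pc_baseEnd, h3]
    simp [Finsupp.single_apply, apply_ite (algebraMap k R)]
  · intro w hw hw'; ext c; rw [pc_baseEnd, h4 w hw hw']; simp

theorem unitC_iff {S : Type} [CommRing S] (D : Module.End S (BW κ S)) :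
    UnitAxioms S dg D ↔ UnitC dg (pc D) :=
  ⟨fun ⟨a, b, c, d⟩ => ⟨a, b, c, d⟩, fun ⟨a, b, c, d⟩ => ⟨a, b, c, d⟩⟩

theorem gauge_eq [Algebra ℚ R] {m : Ideal R} {N : ℕ} (hN : m ^ N = ⊥)
    {d : Module.End R (BW κ R)} (hd : CoeffIn R m d) (B x : Module.End R (BW κ R)) :
    B + gaugeEnd k R N B d x = IsNilpotent.exp d * (B + x) * IsNilpotent.exp (-d) := by
  rw [conj_eq hN hd, gaugeEnd, add_assoc]
  congr 2
  refine Finset.sum_congr rfl fun i _ => ?_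
  rw [Function.iterate_succ_apply]
  have e : (d * x - x * d) - (B * d - d * B) = d * (B + x) - (B + x) * d :=
    abs_g (A := Module.End R (BW κ R)) d x B
  rw [e]
  have hc : algebraMap k R ((((i + 1).factorial : ℕ) : k)⁻¹) =
      algebraMap ℚ R ((((i + 1).factorial : ℕ) : ℚ)⁻¹) := by
    have hk : ((((i + 1).factorial : ℕ) : k)) ≠ 0 := Nat.cast_ne_zero.2 (Nat.factorial_ne_zero _)
    have hq : ((((i + 1).factorial : ℕ) : ℚ)) ≠ 0 := Nat.cast_ne_zero.2 (Nat.factorial_ne_zero _)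
    have a1 : algebraMap k R ((((i + 1).factorial : ℕ) : k)⁻¹) * (((i + 1).factorial : ℕ) : R) = 1 := by
      rw [← map_natCast (algebraMap k R), ← map_mul, inv_mul_cancel₀ hk, map_one]
    have a2 : (((i + 1).factorial : ℕ) : R) * algebraMap ℚ R ((((i + 1).factorial : ℕ) : ℚ)⁻¹) = 1 := by
      rw [← map_natCast (algebraMap ℚ R), ← map_mul, mul_inv_cancel₀ hq, map_one]
    exact left_inv_eq_right_inv a1 a2
  rw [hc, algebraMap_smul]

theorem base_sub_coeff {m : Ideal R} (Db : Module.End k (BW κ k)) (D : Module.End R (BW κ R)) :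
    (∀ ls ms, (D (Finsupp.single ls 1) -
              mapBW k R (Db (Finsupp.single ls 1)) : BW κ R) ms ∈ m) ↔
      CoeffIn R m (D - baseEnd k R Db) := by
  simp only [CoeffIn, LinearMap.sub_apply, baseEnd_single]

theorem add_sub_end {S : Type} [CommRing S] (B x : Module.End S (BW κ S)) : B + x - B = x :=
  add_sub_cancel_left (G := Module.End S (BW κ S)) B x

theorem add_sub_end' {S : Type} [CommRing S] (B x : Module.End S (BW κ S)) : B + (x - B) = x :=
  add_sub_cancel (G := Module.End S (BW κ S)) B x

theorem end_add_cancel {S : Type} [CommRing S] {B x y : Module.End S (BW κ S)}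
    (h : B + x = B + y) : x = y := by
  rw [← add_sub_end B x, h, add_sub_end]

end base
end NCB

open NCB in
/-- Let `(A,b)` be a unital A∞-algebra over a field `k` of characteristic `0`.
For every artin local `k`-algebra `R` with residue field `k` and maximal ideal `m`, the
assignment `x ↦ (A⊗R, b⊗R + x)` induces a bijection
`Def_{C̄^•(A)[1]}(R) = MC(C̄^•(A)[1]⊗m_R)/exp((C̄^•(A)[1]⊗m_R)⁰) ≅ 𝖣𝖠𝗅𝗀_A(R)`:
(a) `x ↦ b⊗R + x` is a bijection from the Maurer–Cartan set onto the set of deformations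
of `(A,b)` to `R`, and (b) two Maurer–Cartan elements are gauge equivalent exactly when the
corresponding deformations are isomorphic, so that the map descends to a bijection on the
quotients. -/
theorem statement5 {k : Type} [Field k] [CharZero k] {κ : Type} (dg : κ → ℤ)
    (R : Type) [CommRing R] [Algebra k R] [IsArtinianRing R] [IsLocalRing R]
    (m : Ideal R) (hm : m = IsLocalRing.maximalIdeal R) (N : ℕ) (hN : m ^ N = ⊥)
    (hres : Function.Bijective (algebraMap k (R ⧸ m)))
    (Db : Module.End k (BW κ k))
    (hb1 : IsCoder k dg 1 Db) (hb2 : HomogEnd k dg 1 Db) (hb3 : Db * Db = 0)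
    (hb4 : Db (Finsupp.single [] 1) = 0) (hb5 : UnitAxioms k dg Db) :
    -- (a) Maurer–Cartan elements correspond bijectively to deformations
    Set.BijOn (fun x => baseEnd k R Db + x)
      {x : Module.End R (BW κ R) |
        IsCoder R dg 1 x ∧ HomogEnd R dg 1 x ∧ NormalizedEnd R x ∧ CoeffIn R m x ∧
          baseEnd k R Db * x + x * baseEnd k R Db + x * x = 0}
      {D : Module.End R (BW κ R) |
        IsCoder R dg 1 D ∧ HomogEnd R dg 1 D ∧ D * D = 0 ∧
          (∀ ls ms, (D (Finsupp.single ls 1) -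
              mapBW k R (Db (Finsupp.single ls 1)) : BW κ R) ms ∈ m) ∧
          UnitAxioms R dg D} ∧
    -- (b) gauge equivalence corresponds to isomorphism of deformations
    ∀ x ∈ {x : Module.End R (BW κ R) |
        IsCoder R dg 1 x ∧ HomogEnd R dg 1 x ∧ NormalizedEnd R x ∧ CoeffIn R m x ∧
          baseEnd k R Db * x + x * baseEnd k R Db + x * x = 0},
    ∀ y ∈ {x : Module.End R (BW κ R) |
        IsCoder R dg 1 x ∧ HomogEnd R dg 1 x ∧ NormalizedEnd R x ∧ CoeffIn R m x ∧
          baseEnd k R Db * x + x * baseEnd k R Db + x * x = 0},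
      ((∃ d : Module.End R (BW κ R),
          (IsCoder R dg 0 d ∧ HomogEnd R dg 0 d ∧ NormalizedEnd R d ∧ CoeffIn R m d) ∧
            gaugeEnd k R N (baseEnd k R Db) d x = y) ↔
        (∃ f : Module.End R (BW κ R),
          IsCoalgMor R f ∧ HomogEnd R dg 0 f ∧ ReducesToId R m f ∧
            Function.Bijective f ∧
            f * (baseEnd k R Db + x) = (baseEnd k R Db + y) * f)) := by
  let _ : Algebra ℚ R := ((algebraMap k R).comp (algebraMap ℚ k)).toAlgebra
  set B := baseEnd k R Db with hBdef
  have hB : AStr dg B :=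
    ⟨baseEnd_coder dg hb1, baseEnd_homog dg hb2, baseEnd_sq hb3, baseEnd_unit dg hb5⟩
  have hB0 : pc B [] = 0 := by
    ext c
    rw [hBdef, pc_baseEnd, pc, hb4]; simp
  have hstr : ∀ x : Module.End R (BW κ R), (IsCoder R dg 1 x ∧ HomogEnd R dg 1 x ∧
      NormalizedEnd R x ∧ CoeffIn R m x ∧ B * x + x * B + x * x = 0) →
      AStr dg (B + x) ∧ CoeffIn R m ((B + x) - B) := by
    rintro x ⟨h1, h2, h3, h4, h5⟩
    refine ⟨⟨hB.c.add' dg h1, hB.h.add' dg h2, ?_, ?_⟩, ?_⟩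
    · have := abs_mc (A := Module.End R (BW κ R)) hB.sq x
      exact this.trans h5
    · rw [pc_add']; exact unitC_add dg hB.u h3
    · rw [add_sub_end]; exact h4
  refine ⟨⟨?_, ?_, ?_⟩, ?_⟩
  · intro x hx
    obtain ⟨h, h'⟩ := hstr x hx
    exact ⟨h.c, h.h, h.sq, (base_sub_coeff Db _).2 h', (unitC_iff dg _).2 h.u⟩
  · intro x _ y _ hxy
    exact end_add_cancel hxy
  · rintro D ⟨h1, h2, h3, h4, h5⟩
    refine ⟨D - B, ⟨h1.sub' dg hB.c, h2.sub' dg hB.h, ?_, (base_sub_coeff Db _).1 h4, ?_⟩,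
      add_sub_end' B D⟩
    · intro w hw
      change pc (D - B) w = 0
      rw [pc_sub, unitC_sub dg ((unitC_iff dg _).1 h5) hB.u w hw, sub_self]
    · have := abs_mc (A := Module.End R (BW κ R)) hB.sq (D - B)
      rw [← this, add_sub_end', h3]
  · intro x hx y hy
    obtain ⟨hx1, hx2⟩ := hstr x hx
    obtain ⟨hy1, hy2⟩ := hstr y hy
    constructor
    · rintro ⟨d, ⟨h1, h2, h3, h4⟩, hg⟩
      have hd1 : d ∈ (filtE κ m N hN).F 1 := by rw [mem_filtE, pow_one]; exact h4
      have hnil : IsNilpotent d := (filtE κ m N hN).nilp hd1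
      have hEE' : IsNilpotent.exp d * IsNilpotent.exp (-d) = 1 :=
        IsNilpotent.exp_mul_exp_neg_self hnil
      have hE'E : IsNilpotent.exp (-d) * IsNilpotent.exp d = 1 :=
        IsNilpotent.exp_neg_mul_exp_self hnil
      refine ⟨IsNilpotent.exp d, coalgMor_exp dg h1 h2 hnil, homogEnd_exp dg h2 hnil, ?_, ?_, ?_⟩
      · have := (filtE κ m N hN).exp_sub_one hd1
        rw [mem_filtE, pow_one] at this
        exact this
      · refine Function.bijective_iff_has_inverse.2 ⟨(IsNilpotent.exp (-d) : Module.End R (BW κ R)), ?_, ?_⟩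
        · intro v
          rw [← Module.End.mul_apply, hE'E, Module.End.one_apply]
        · intro v
          rw [← Module.End.mul_apply, hEE', Module.End.one_apply]
      · have := gauge_eq (k := k) hN h4 B x
        rw [hg] at this
        exact abs_cj' (A := Module.End R (BW κ R)) hE'E this.symm
    · rintro ⟨f, hf, hfh, hf1, -, hfD⟩
      obtain ⟨d, hd0, hdm, hd⟩ := exists_log dg hN hB hB0 hx1 hy1 hx2 hy2 hf hfh hfD hf1
      refine ⟨d, ⟨hd0.c, hd0.h, hd0.n, hdm⟩, ?_⟩
      have hd1 : d ∈ (filtE κ m N hN).F 1 := by rw [mem_filtE, pow_one]; exact hdm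
      have hnil : IsNilpotent d := (filtE κ m N hN).nilp hd1
      have hEE' : IsNilpotent.exp d * IsNilpotent.exp (-d) = 1 :=
        IsNilpotent.exp_mul_exp_neg_self hnil
      have h1 := gauge_eq (k := k) hN hdm B x
      have h2 := abs_cj (A := Module.End R (BW κ R)) hEE' hd
      exact end_add_cancel (h1.trans h2)
end

section
/- Let E be a cochain complex of vector spaces over a field k of characteristic 0 with differential d_E. For every R ∈ Art, the assignment x ↦ (E⊗_kR, d_E⊗_kR + x) induces a bijection Def_{End_k(E)}(R) = MC(End_k(E)⊗_km_R)/exp((End_k(E)⊗_km_R)⁰) ≅ 𝖣_E(R), natural in R, where 𝖣_E(R) is the set of isomorphism classes of deformations of the complex E to R. -/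
open TensorProduct

namespace NCE

variable (k : Type) [Field k] [CharZero k]
variable (R : Type) [CommRing R] [Algebra k R]
variable {M : Type} [AddCommGroup M] [Module R M]

/-- Truncated exponential `Σ_{i<N} F^i/i!` of an endomorphism (equal to `exp F` whenever
`F` has coefficients in `m` with `m^N = 0`). -/
noncomputable def expM (N : ℕ) (F : Module.End R M) : Module.End R M :=
  ∑ i ∈ Finset.range N, algebraMap k R ((i.factorial : k)⁻¹) • F ^ i

/-- Truncated logarithm `Σ_{1≤n≤N} (−1)^{n−1}(F−1)^n/n`. -/
noncomputable def logM (N : ℕ) (F : Module.End R M) : Module.End R M :=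
  ∑ n ∈ Finset.range (N + 1),
    if n = 0 then 0 else algebraMap k R ((-1 : k) ^ (n - 1) / (n : k)) • (F - 1) ^ n

/-- The gauge action `e^α • μ = μ + Σᵢ ad_α^i/(i+1)!·([α,μ] − ∂α)` of a degree-0 element
`α` on a degree-1 element `μ` of the dg Lie algebra of endomorphisms with differential
`∂ = [D,−]` (a finite sum: all terms beyond `N` vanish). -/
noncomputable def gaugeM (N : ℕ) (D α μ : Module.End R M) : Module.End R M :=
  μ + ∑ i ∈ Finset.range N, algebraMap k R (((i + 1).factorial : k)⁻¹) •
    (fun y => α * y - y * α)^[i] ((α * μ - μ * α) - (D * α - α * D))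

variable {E : Type} [AddCommGroup E] [Module k E]

/-- The graded piece `(ℰ i) ⊗ R` of the base change `E ⊗ R`. -/
noncomputable def piece (ℰ : ℤ → Submodule k E) (i : ℤ) : Submodule R (R ⊗[k] E) :=
  LinearMap.range (LinearMap.baseChange R (ℰ i).subtype)

/-- An endomorphism of `E ⊗ R` is homogeneous of degree `s`. -/
def DegM (ℰ : ℤ → Submodule k E) (s : ℤ) (φ : Module.End R (R ⊗[k] E)) : Prop :=
  ∀ i : ℤ, ∀ v ∈ piece k R ℰ i, φ v ∈ piece k R ℰ (i + s)

/-- An endomorphism of `E ⊗ R` has coefficients in the ideal `m` (i.e. lies in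
`End_k(E) ⊗ m_R`). -/
def CoeffM (m : Ideal R) (φ : Module.End R (R ⊗[k] E)) : Prop :=
  ∀ v, φ v ∈ m • (⊤ : Submodule R (R ⊗[k] E))

end NCE

namespace NCEaux

open NCE Polynomial

/-- Conjugation formula `exp(ad a) X = exp(a) X exp(-a)`. -/
theorem exp_ad {A : Type} [Ring A] [Algebra ℚ A] (a X : A) (ha : IsNilpotent a) :
    IsNilpotent.exp (LinearMap.mulLeft ℚ a - LinearMap.mulRight ℚ a) X =
      IsNilpotent.exp a * X * IsNilpotent.exp (-a) := by
  obtain ⟨N, hN⟩ := ha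
  have hN' : (-a) ^ N = 0 := by rw [neg_pow, hN, mul_zero]
  have hL : (LinearMap.mulLeft ℚ a) ^ N = 0 := by
    rw [LinearMap.pow_mulLeft, hN]; ext; simp
  have hR : (LinearMap.mulRight ℚ (-a)) ^ N = 0 := by
    rw [LinearMap.pow_mulRight, hN']; ext; simp
  have e : LinearMap.mulLeft ℚ a - LinearMap.mulRight ℚ a =
      LinearMap.mulLeft ℚ a + LinearMap.mulRight ℚ (-a) := by
    ext x; simp [sub_eq_add_neg]
  rw [e, IsNilpotent.exp_add_of_commute (LinearMap.commute_mulLeft_right (R := ℚ) a (-a)) ⟨N, hL⟩ ⟨N, hR⟩,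
    IsNilpotent.exp_eq_sum hL, IsNilpotent.exp_eq_sum hR, IsNilpotent.exp_eq_sum hN,
    IsNilpotent.exp_eq_sum hN']
  simp only [LinearMap.pow_mulLeft, LinearMap.pow_mulRight, Module.End.mul_apply,
    LinearMap.sum_apply, LinearMap.smul_apply, LinearMap.mulLeft_apply, LinearMap.mulRight_apply]
  rw [mul_assoc, Finset.sum_mul, Finset.mul_sum]
  simp only [smul_mul_assoc, mul_smul_comm]

/-- The exponential of a nilpotent `a` is `1 + a + a^2 * q(a)`. -/
theorem exp_tail {A : Type} [Ring A] [Algebra ℚ A] {a : A} (ha : IsNilpotent a) :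
    ∃ q : ℚ[X], IsNilpotent.exp a = 1 + a + a ^ 2 * aeval a q := by
  obtain ⟨N, hN⟩ := ha
  have h2 : a ^ (N + 2) = 0 := by rw [pow_add, hN, zero_mul]
  refine ⟨∑ i ∈ Finset.range N, C (((i + 2).factorial : ℚ)⁻¹) * X ^ i, ?_⟩
  rw [IsNilpotent.exp_eq_sum h2, Finset.sum_range_succ', Finset.sum_range_succ', map_sum,
    Finset.mul_sum]
  have : ∀ i, a ^ 2 * aeval a (C (((i + 2).factorial : ℚ)⁻¹) * X ^ i) =
      (((i + 2).factorial : ℚ)⁻¹) • a ^ (i + 2) := by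
    intro i
    rw [← smul_eq_C_mul, map_smul, mul_smul_comm, map_pow, aeval_X, ← pow_add, add_comm]
  simp only [this]
  simp [add_assoc]
  abel

/-- Logarithm: every unipotent `1 + n` is the exponential of a polynomial in `n` without
constant term. -/
theorem exists_log {A : Type} [Ring A] [Algebra ℚ A] (n : A) (N : ℕ) (hn : n ^ N = 0) :
    ∃ p : ℚ[X], IsNilpotent.exp (aeval n (X * p)) = 1 + n := by
  have nil : ∀ p : ℚ[X], IsNilpotent (aeval n (X * p)) := fun p =>
    ⟨N, by rw [← map_pow, mul_pow, map_mul, map_pow, aeval_X, hn, zero_mul]⟩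
  have key : ∀ j : ℕ, ∃ p c : ℚ[X],
      IsNilpotent.exp (aeval n (X * p)) = aeval n (1 + X + X ^ (j + 1) * c) := by
    intro j
    induction j with
    | zero =>
      exact ⟨0, -1, by simp [IsNilpotent.exp_zero]⟩
    | succ j ih =>
      obtain ⟨p, c, h⟩ := ih
      have hb : IsNilpotent (aeval n (X * (- X ^ j * c))) := nil _
      obtain ⟨q, hq⟩ := exp_tail hb
      set b : ℚ[X] := X * (- X ^ j * c) with hbdef
      refine ⟨p + - X ^ j * c, -c - X ^ j * c ^ 2 + X ^ j * c ^ 2 * (q.comp b) * 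
        (1 + X + X ^ (j + 1) * c), ?_⟩
      have e1 : aeval n (X * (p + - X ^ j * c)) = aeval n (X * p) + aeval n b := by
        rw [mul_add, map_add]
      have hc : Commute (aeval n (X * p)) (aeval n b) := by
        rw [Commute, SemiconjBy, ← map_mul, ← map_mul, mul_comm]
      rw [e1, IsNilpotent.exp_add_of_commute hc (nil p) hb, h, hq, ← aeval_comp, ← map_pow,
        ← map_mul, ← map_one (aeval (R := ℚ) n), ← map_add, ← map_add, ← map_mul]
      congr 1
      rw [hbdef]
      ring
  obtain ⟨p, c, h⟩ := key N
  refine ⟨p, ?_⟩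
  rw [h, map_add, map_mul, map_pow, aeval_X, pow_succ, hn]
  simp

variable (R : Type) [CommRing R]
variable {M : Type} [AddCommGroup M] [Module R M]

/-- Generic version of `CoeffM`. -/
def Coef (m : Ideal R) (φ : Module.End R M) : Prop :=
  ∀ v, φ v ∈ m • (⊤ : Submodule R M)

/-- Generic version of `DegM`. -/
def Deg (P : ℤ → Submodule R M) (s : ℤ) (φ : Module.End R M) : Prop :=
  ∀ i : ℤ, ∀ v ∈ P i, φ v ∈ P (i + s)

theorem Coef.mul {I J : Ideal R} {f g : Module.End R M}
    (hf : Coef R I f) (hg : Coef R J g) : Coef R (I * J) (f * g) := by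
  intro v
  have h1 : (f * g) v ∈ (J • (⊤ : Submodule R M)).map f :=
    Submodule.mem_map_of_mem (hg v)
  rw [Submodule.map_smul''] at h1
  rw [mul_comm, Submodule.mul_smul]
  refine Submodule.smul_mono le_rfl ?_ h1
  rintro _ ⟨w, -, rfl⟩
  exact hf w

theorem Coef.sub {I : Ideal R} {f g : Module.End R M}
    (hf : Coef R I f) (hg : Coef R I g) : Coef R I (f - g) :=
  fun v => Submodule.sub_mem _ (hf v) (hg v)

theorem coeffM_top (f : Module.End R M) : Coef R ⊤ f := by
  intro v; simp

theorem Coef.mul_right {I : Ideal R} {f : Module.End R M}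
    (hf : Coef R I f) (g) : Coef R I (f * g) := fun v => hf (g v)

theorem Coef.pow {I : Ideal R} {f : Module.End R M}
    (hf : Coef R I f) (i : ℕ) : Coef R (I ^ i) (f ^ i) := by
  induction i with
  | zero => rw [pow_zero, Ideal.one_eq_top]; exact coeffM_top R _
  | succ i ih => rw [pow_succ, pow_succ]; exact Coef.mul R ih hf

theorem coeffM_bot {f : Module.End R M} (hf : Coef R ⊥ f) : f = 0 := by
  ext v
  simpa using hf _

theorem Coef.ad {I : Ideal R} {a : Module.End R M}
    (ha : Coef R I a) (i : ℕ) (y : Module.End R M) :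
    Coef R (I ^ i) ((fun y => a * y - y * a)^[i] y) := by
  induction i with
  | zero => rw [pow_zero, Ideal.one_eq_top]; exact coeffM_top R _
  | succ i ih =>
    rw [Function.iterate_succ_apply']
    refine Coef.sub R ?_ ?_
    · rw [pow_succ']; exact Coef.mul R ha ih
    · rw [pow_succ]; exact Coef.mul R ih ha

/-- Degree-zero endomorphisms, as a subalgebra. -/
def deg0 (ℰ : ℤ → Submodule R M) : Subalgebra R (Module.End R M) where
  carrier := {φ | Deg R ℰ 0 φ}
  mul_mem' := by
    intro a b ha hb i v hv
    have := ha _ _ (hb i v hv)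
    rw [add_zero] at this
    exact this
  add_mem' := fun ha hb i v hv => Submodule.add_mem _ (ha i v hv) (hb i v hv)
  algebraMap_mem' := by
    intro r i v hv
    rw [add_zero, Module.algebraMap_end_apply]
    exact Submodule.smul_mem _ _ hv

theorem aeval_deg0 [Algebra ℚ (Module.End R M)] (f : ℚ →+* R)
    (hf : ∀ (q : ℚ) (φ : Module.End R M), q • φ = f q • φ)
    (ℰ : ℤ → Submodule R M) {a : Module.End R M} (ha : Deg R ℰ 0 a) (p : ℚ[X]) :
    Deg R ℰ 0 (aeval a p) := by
  change aeval a p ∈ deg0 R ℰ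
  rw [aeval_eq_sum_range]
  refine Subalgebra.sum_mem _ fun i _ => ?_
  rw [hf]
  exact Subalgebra.smul_mem _ (Subalgebra.pow_mem _ (show a ∈ deg0 R ℰ from ha) _) _

/-- The gauge action is conjugation by the exponential. -/
theorem gauge_eq (k : Type) [Field k] [CharZero k] [Algebra k R] [Algebra ℚ (Module.End R M)]
    (hf : ∀ (q : ℚ) (φ : Module.End R M), q • φ = algebraMap k R (q : k) • φ)
    {m : Ideal R} {N : ℕ} (hN : m ^ N = ⊥) (D a x : Module.End R M)
    (ha : Coef R m a) :
    D + gaugeM k R N D a x = IsNilpotent.exp a * (D + x) * IsNilpotent.exp (-a) := by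
  have hnil : a ^ N = 0 := coeffM_bot R (hN ▸ Coef.pow R ha N)
  rw [← exp_ad _ _ ⟨N, hnil⟩]
  have hpow : ∀ i (y : Module.End R M),
      ((LinearMap.mulLeft ℚ a - LinearMap.mulRight ℚ a) ^ i) y =
        (fun y => a * y - y * a)^[i] y := by
    intro i y
    rw [Module.End.pow_apply]
    rfl
  have hz : (LinearMap.mulLeft ℚ a - LinearMap.mulRight ℚ a) ^ (N + 1) = 0 := by
    refine LinearMap.ext fun y => ?_
    rw [pow_succ', Module.End.mul_apply, hpow]
    have : (fun y => a * y - y * a)^[N] y = 0 := coeffM_bot R (hN ▸ Coef.ad R ha N y)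
    rw [this, map_zero, LinearMap.zero_apply]
  rw [IsNilpotent.exp_eq_sum hz, LinearMap.sum_apply, Finset.sum_range_succ', gaugeM]
  simp only [LinearMap.smul_apply, hpow, Function.iterate_succ_apply, Function.iterate_zero_apply]
  have e : a * x - x * a - (D * a - a * D) = a * (D + x) - (D + x) * a := by noncomm_ring
  rw [e, ← add_assoc, add_comm]
  congr 1
  · refine Finset.sum_congr rfl fun i _ => ?_
    rw [hf]
    simp
  · simp

theorem main (k : Type) [Field k] [CharZero k] [Algebra k R] (ℰ : ℤ → Submodule R M)
    (m : Ideal R) (N : ℕ) (hN : m ^ N = ⊥) (D : Module.End R M)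
    (hD : Deg R ℰ 1 D) (hDD : D * D = 0) :
    Set.BijOn (fun x => D + x)
      {x : Module.End R M |
        Deg R ℰ 1 x ∧ Coef R m x ∧ D * x + x * D + x * x = 0}
      {d' : Module.End R M |
        Deg R ℰ 1 d' ∧ d' * d' = 0 ∧ ∀ v, d' v - D v ∈ m • (⊤ : Submodule R M)} ∧
    ∀ x ∈ {x : Module.End R M |
        Deg R ℰ 1 x ∧ Coef R m x ∧ D * x + x * D + x * x = 0},
    ∀ y ∈ {x : Module.End R M |
        Deg R ℰ 1 x ∧ Coef R m x ∧ D * x + x * D + x * x = 0},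
      ((∃ α : Module.End R M, Deg R ℰ 0 α ∧ Coef R m α ∧ gaugeM k R N D α x = y) ↔
        (∃ φ : Module.End R M, Deg R ℰ 0 φ ∧ Function.Bijective φ ∧
          (∀ v, φ v - v ∈ m • (⊤ : Submodule R M)) ∧ φ * (D + x) = (D + y) * φ)) := by
  refine ⟨⟨?_, ?_, ?_⟩, ?_⟩
  · rintro x ⟨h1, h2, h3⟩
    refine ⟨fun i v hv => Submodule.add_mem _ (hD i v hv) (h1 i v hv), ?_, fun v => ?_⟩
    · have : (D + x) * (D + x) = D * D + (D * x + x * D + x * x) := by noncomm_ring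
      rw [this, hDD, h3, add_zero]
    · simpa using h2 v
  · intro x _ y _ h
    exact add_left_cancel h
  · rintro d ⟨h1, h2, h3⟩
    refine ⟨d - D, ⟨fun i v hv => Submodule.sub_mem _ (h1 i v hv) (hD i v hv), h3, ?_⟩, ?_⟩
    · have : D * (d - D) + (d - D) * D + (d - D) * (d - D) = d * d - D * D := by noncomm_ring
      rw [this, hDD, h2, sub_zero]
    · simp
  intro x _ y _
  let f : ℚ →+* R := (algebraMap k R).comp (Rat.castHom k)
  let _ : Algebra ℚ (Module.End R M) := Algebra.compHom _ f
  have hf : ∀ (q : ℚ) (φ : Module.End R M), q • φ = f q • φ := fun _ _ => rfl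
  have hf' : ∀ (q : ℚ) (φ : Module.End R M), q • φ = algebraMap k R (q : k) • φ :=
    fun _ _ => rfl
  have nil : ∀ a : Module.End R M, Coef R m a → a ^ N = 0 := fun a ha =>
    NCEaux.coeffM_bot R (hN ▸ NCEaux.Coef.pow R ha N)
  constructor
  · rintro ⟨a, h0, hc, hg⟩
    have ha : IsNilpotent a := ⟨N, nil a hc⟩
    obtain ⟨q, hq⟩ := NCEaux.exp_tail ha
    have hq' : IsNilpotent.exp a = Polynomial.aeval a (1 + Polynomial.X + Polynomial.X ^ 2 * q) := by
      rw [hq]; simp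
    refine ⟨IsNilpotent.exp a, ?_, ?_, ?_, ?_⟩
    · rw [hq']
      exact NCEaux.aeval_deg0 R f hf ℰ h0 _
    · exact (Module.End.isUnit_iff _).1 (IsNilpotent.isUnit_exp ha)
    · intro v
      have : IsNilpotent.exp a = 1 + a * (1 + a * Polynomial.aeval a q) := by
        rw [hq]; noncomm_ring
      rw [this]
      simpa using hc ((1 + a * Polynomial.aeval a q) v)
    · rw [← hg, NCEaux.gauge_eq R k hf' hN D a x hc, mul_assoc _ _ (IsNilpotent.exp a),
        IsNilpotent.exp_neg_mul_exp_self ha, mul_one]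
  · rintro ⟨φ, h0, -, hc, hφ⟩
    have hn : Coef R m (φ - 1) := fun v => hc v
    obtain ⟨p, hp⟩ := NCEaux.exists_log (φ - 1) N (nil _ hn)
    rw [add_sub_cancel] at hp
    have hdn : Deg R ℰ 0 (φ - 1) :=
      Subalgebra.sub_mem (NCEaux.deg0 R ℰ) h0 (Subalgebra.one_mem _)
    have hca : Coef R m (Polynomial.aeval (φ - 1) (Polynomial.X * p)) := by
      rw [map_mul, Polynomial.aeval_X]
      exact NCEaux.Coef.mul_right R hn _
    refine ⟨_, NCEaux.aeval_deg0 R f hf ℰ hdn (Polynomial.X * p), hca, ?_⟩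
    apply add_left_cancel (a := D)
    rw [NCEaux.gauge_eq R k hf' hN D _ x hca]
    have hinv := IsNilpotent.exp_mul_exp_neg_self (a := Polynomial.aeval (φ - 1) (Polynomial.X * p))
      ⟨N, nil _ hca⟩
    rw [hp] at hinv ⊢
    rw [hφ, mul_assoc, hinv, mul_one]

theorem degM_baseChange (k : Type) [Field k] [Algebra k R] {E : Type} [AddCommGroup E] [Module k E] (ℰ : ℤ → Submodule k E) (dE : E →ₗ[k] E)
    (hdeg : ∀ i : ℤ, ∀ x ∈ ℰ i, dE x ∈ ℰ (i + 1)) :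
    DegM k R ℰ 1 (LinearMap.baseChange R dE) := by
  rintro i _ ⟨w, rfl⟩
  refine ⟨LinearMap.baseChange R (dE.restrict (hdeg i)) w, ?_⟩
  rw [← LinearMap.comp_apply, ← LinearMap.comp_apply, ← LinearMap.baseChange_comp,
    ← LinearMap.baseChange_comp]
  rfl

end NCEaux

open NCE in
/-- Let `E` be a cochain complex of `k`-vector spaces (`k` of characteristic
`0`).  For every artin local `k`-algebra `R` with residue field `k` and maximal ideal `m`,
the assignment `x ↦ (E⊗R, dE⊗R + x)` induces a bijection
`Def_{End_k(E)}(R) = MC(End_k(E)⊗m_R)/exp((End_k(E)⊗m_R)⁰) ≅ 𝖣_E(R)`: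
(a) `x ↦ dE⊗R + x` is a bijection from the Maurer–Cartan set onto the set of deformations
of the complex `E` to `R`, and (b) two Maurer–Cartan elements are gauge equivalent exactly
when the corresponding deformations are isomorphic, so that the map descends to a
bijection on the quotients. -/
theorem statement8 {k : Type} [Field k] [CharZero k]
    {E : Type} [AddCommGroup E] [Module k E]
    (ℰ : ℤ → Submodule k E) [DirectSum.Decomposition ℰ]
    (dE : E →ₗ[k] E) (hdeg : ∀ i : ℤ, ∀ x ∈ ℰ i, dE x ∈ ℰ (i + 1))
    (hdd : dE ∘ₗ dE = 0)
    (R : Type) [CommRing R] [Algebra k R] [IsArtinianRing R] [IsLocalRing R]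
    (m : Ideal R) (hm : m = IsLocalRing.maximalIdeal R) (N : ℕ) (hN : m ^ N = ⊥)
    (hres : Function.Bijective (algebraMap k (R ⧸ m))) :
    Set.BijOn (fun x => LinearMap.baseChange R dE + x)
      {x : Module.End R (R ⊗[k] E) |
        DegM k R ℰ 1 x ∧ CoeffM k R m x ∧
          LinearMap.baseChange R dE * x + x * LinearMap.baseChange R dE + x * x = 0}
      {d' : Module.End R (R ⊗[k] E) |
        DegM k R ℰ 1 d' ∧ d' * d' = 0 ∧
          ∀ v, d' v - LinearMap.baseChange R dE v ∈
            m • (⊤ : Submodule R (R ⊗[k] E))} ∧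
    ∀ x ∈ {x : Module.End R (R ⊗[k] E) |
        DegM k R ℰ 1 x ∧ CoeffM k R m x ∧
          LinearMap.baseChange R dE * x + x * LinearMap.baseChange R dE + x * x = 0},
    ∀ y ∈ {x : Module.End R (R ⊗[k] E) |
        DegM k R ℰ 1 x ∧ CoeffM k R m x ∧
          LinearMap.baseChange R dE * x + x * LinearMap.baseChange R dE + x * x = 0},
      ((∃ α : Module.End R (R ⊗[k] E), DegM k R ℰ 0 α ∧ CoeffM k R m α ∧
          gaugeM k R N (LinearMap.baseChange R dE) α x = y) ↔
        (∃ φ : Module.End R (R ⊗[k] E), DegM k R ℰ 0 φ ∧ Function.Bijective φ ∧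
          (∀ v, φ v - v ∈ m • (⊤ : Submodule R (R ⊗[k] E))) ∧
          φ * (LinearMap.baseChange R dE + x) = (LinearMap.baseChange R dE + y) * φ)) := by
  have hD := NCEaux.degM_baseChange R k ℰ dE hdeg
  have hDD : LinearMap.baseChange R dE * LinearMap.baseChange R dE = 0 := by
    change LinearMap.baseChange R dE ∘ₗ LinearMap.baseChange R dE = 0
    rw [← LinearMap.baseChange_comp, hdd, LinearMap.baseChange_zero]
  exact NCEaux.main R k (piece k R ℰ) m N hN (LinearMap.baseChange R dE) hD hDD
end

section
/- Let k be a field, R an artin local k-algebra with residue field k and maximal ideal m_R, and R → R' a surjective morphism of artin local k-algebras whose kernel I satisfies I·m_R = 0 and dim_k I = 1; fix a k-basis element e of I. Then the map R ×_k k[ε]/(ε²) → R ×_{R'} R sending (r, r̄ + aε) to (r, r + a·e) — where r̄ ∈ k denotes the residue of r and a ∈ k — is a well-defined isomorphism of k-algebras. -/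
/-- Let `k` be a field, `R` an artin local `k`-algebra with residue field `k`
(residue map `ρ : R →ₐ[k] k` with kernel the maximal ideal `m`), and `f : R → R'` a
surjective morphism of artin local `k`-algebras whose kernel `I` satisfies `I·m = 0` and
`dim_k I = 1`, with a fixed `k`-basis element `e` of `I`.  Then the map
`R ×_k k[ε]/(ε²) → R ×_{R'} R`, `(r, r̄ + aε) ↦ (r, r + a·e)`, is a well-defined
isomorphism of `k`-algebras.  (The fiber products are realized as equalizer subalgebras of
`R × k[ε]` resp. `R × R`; an element of `R ×_k k[ε]/(ε²)` has first component `r` and second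
component `r̄ + aε` where `r̄ = ρ r` and `a` is the `ε`-coefficient.) -/
theorem statement17 (k : Type*) [Field k]
    (R : Type*) [CommRing R] [Algebra k R] [IsArtinianRing R] [IsLocalRing R]
    (R' : Type*) [CommRing R'] [Algebra k R'] [IsArtinianRing R'] [IsLocalRing R']
    (m : Ideal R) (hm : m = IsLocalRing.maximalIdeal R)
    (ρ : R →ₐ[k] k) (hρ : RingHom.ker (ρ : R →+* k) = m)
    (f : R →ₐ[k] R') (hf : Function.Surjective f)
    (hIm : ∀ x ∈ RingHom.ker (f : R →+* R'), ∀ y ∈ m, x * y = 0)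
    (e : R) (he : e ∈ RingHom.ker (f : R →+* R')) (he0 : e ≠ 0)
    (hbasis : ∀ x ∈ RingHom.ker (f : R →+* R'), ∃ a : k, x = a • e) :
    ∃ ψ : AlgHom.equalizer (ρ.comp (AlgHom.fst k R (DualNumber k)))
            ((TrivSqZeroExt.fstHom k k k).comp (AlgHom.snd k R (DualNumber k)))
          ≃ₐ[k]
          AlgHom.equalizer (f.comp (AlgHom.fst k R R)) (f.comp (AlgHom.snd k R R)),
      ∀ x, ((ψ x : R × R)) =
        ((x : R × DualNumber k).1,
         (x : R × DualNumber k).1 + (TrivSqZeroExt.snd (x : R × DualNumber k).2) • e) := by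
  have hfe : f e = 0 := by simpa using he
  have hre : ∀ r : R, r * e = ρ r • e := by
    intro r
    have h1 : r - algebraMap k R (ρ r) ∈ m := by
      rw [← hρ, RingHom.mem_ker]
      simp
    have h2 := hIm e he _ h1
    rw [Algebra.smul_def]
    linear_combination h2
  have hem : e ∈ m := by
    rw [hm, IsLocalRing.mem_maximalIdeal, mem_nonunits_iff]
    intro hu
    have h3 := hu.map f
    rw [hfe] at h3
    exact not_isUnit_zero h3
  have hee : e * e = 0 := hIm e he e hem
  let A := AlgHom.equalizer (ρ.comp (AlgHom.fst k R (DualNumber k)))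
            ((TrivSqZeroExt.fstHom k k k).comp (AlgHom.snd k R (DualNumber k)))
  let B := AlgHom.equalizer (f.comp (AlgHom.fst k R R)) (f.comp (AlgHom.snd k R R))
  have hA : ∀ x : A, ρ (x : R × DualNumber k).1 =
      TrivSqZeroExt.fst (x : R × DualNumber k).2 := fun x => x.2
  have hB : ∀ x : B, f (x : R × R).1 = f (x : R × R).2 := fun x => x.2
  let φ : A →ₐ[k] B := AlgHom.ofLinearMap
    { toFun := fun x => ⟨((x : R × DualNumber k).1,
         (x : R × DualNumber k).1 + (TrivSqZeroExt.snd (x : R × DualNumber k).2) • e), by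
          change f _ = f _
          simp [hfe]⟩
      map_add' := by
        intro x y
        apply Subtype.ext
        apply Prod.ext
        · simp
        · simp [add_smul]
          ring
      map_smul' := by
        intro c x
        apply Subtype.ext
        apply Prod.ext
        · simp
        · simp [mul_smul] }
    (by
      apply Subtype.ext
      apply Prod.ext
      · simp
      · simp)
    (by
      intro x y
      apply Subtype.ext
      apply Prod.ext
      · simp
      · have hx := hre (x : R × DualNumber k).1
        have hy := hre (y : R × DualNumber k).1
        rw [hA] at hx hy
        simp only [Algebra.smul_def] at hx hy
        simp [Algebra.smul_def]
        linear_combination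
          (-algebraMap k R (TrivSqZeroExt.snd (y : R × DualNumber k).2)) * hx
          - algebraMap k R (TrivSqZeroExt.snd (x : R × DualNumber k).2) * hy
          - algebraMap k R (TrivSqZeroExt.snd (x : R × DualNumber k).2)
            * algebraMap k R (TrivSqZeroExt.snd (y : R × DualNumber k).2) * hee)
  have hφ : ∀ x : A, ((φ x : B) : R × R) = ((x : R × DualNumber k).1,
         (x : R × DualNumber k).1 + (TrivSqZeroExt.snd (x : R × DualNumber k).2) • e) :=
    fun x => rfl
  have hbij : Function.Bijective φ := by
    constructor
    · intro x y hxy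
      have h := congrArg (fun z : B => (z : R × R)) hxy
      simp only [hφ, Prod.mk.injEq] at h
      obtain ⟨h1, h2⟩ := h
      rw [h1] at h2
      have h3 := smul_left_injective k he0 (add_left_cancel h2)
      apply Subtype.ext
      apply Prod.ext
      · exact h1
      · apply TrivSqZeroExt.ext
        · rw [← hA, ← hA, h1]
        · exact h3
    · intro y
      obtain ⟨a, ha⟩ := hbasis ((y : R × R).2 - (y : R × R).1) (by
        rw [RingHom.mem_ker]
        simp [hB y])
      refine ⟨⟨((y : R × R).1, (ρ (y : R × R).1, a)), rfl⟩, ?_⟩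
      apply Subtype.ext
      rw [hφ]
      apply Prod.ext
      · rfl
      · change (y : R × R).1 + a • e = (y : R × R).2
        rw [← ha]
        ring
  exact ⟨AlgEquiv.ofBijective φ hbij, fun x => hφ x⟩
end
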